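/- arXiv:1511.05671 — 4 statements merged into one kernel-verified Lean document; each statement's English description precedes it below -/
import Mathlib

section
/- For every positive integer m, the vector w ∈ ℝ^m with entries w_k = √(2/(m+1/2)) · cos( (m−k+1/2)π/(2m+1) ), k = 1,…,m, satisfies ∑_{k=1}^m w_k > √(2m+1)/π. -/
open Matrix Finset

noncomputable def l2norm {n : Type*} [Fintype n] (v : n → ℂ) : ℝ :=
  Real.sqrt (∑ i, Complex.normSq (v i))

noncomputable def l2normR {n : Type*} [Fintype n] (v : n → ℝ) : ℝ :=
  Real.sqrt (∑ i, (v i) ^ 2)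

/-- Smallest singular value of a matrix, as the infimum of `‖M x‖₂` over unit vectors `x`. -/
noncomputable def sigmaMin {m n : Type*} [Fintype m] [Fintype n] (M : Matrix m n ℂ) : ℝ :=
  sInf {t : ℝ | ∃ x : n → ℂ, l2norm x = 1 ∧ t = l2norm (M.mulVec x)}

/-- Largest singular value (= spectral norm) of a matrix. -/
noncomputable def sigmaMax {m n : Type*} [Fintype m] [Fintype n] (M : Matrix m n ℂ) : ℝ :=
  sSup {t : ℝ | ∃ x : n → ℂ, l2norm x = 1 ∧ t = l2norm (M.mulVec x)}

/-- Probability of an event under the uniform distribution on a finite type. -/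
noncomputable def unifProb {α : Type*} [Fintype α] (P : α → Prop) : ℝ :=
  (Nat.card {a : α // P a} : ℝ) / (Fintype.card α : ℝ)

/-- Expectation of a real random variable under the uniform distribution on a finite type. -/
noncomputable def unifExp {α : Type*} [Fintype α] (f : α → ℝ) : ℝ :=
  (∑ a, f a) / (Fintype.card α : ℝ)

/-- The first-order difference matrix. -/
def Dmat (m : ℕ) : Matrix (Fin m) (Fin m) ℝ :=
  Matrix.of fun i j => if i = j then 1 else if (j : ℕ) + 1 = (i : ℕ) then -1 else 0

noncomputable def DmatC (m : ℕ) : Matrix (Fin m) (Fin m) ℂ := (Dmat m).map Complex.ofReal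

/-- The harmonic frame with frequencies `ω`. -/
noncomputable def harmonicFrame (N k : ℕ) (ω : Fin k → Fin N) : Matrix (Fin N) (Fin k) ℂ :=
  Matrix.of fun j t => Complex.exp (2 * Real.pi * Complex.I * ((ω t : ℕ) : ℂ) * ((j : ℕ) : ℂ) / N)

/-- The (unnormalized) DFT matrix. -/
noncomputable def dftMatrix (N : ℕ) : Matrix (Fin N) (Fin N) ℂ :=
  Matrix.of fun j t => Complex.exp (2 * Real.pi * Complex.I * ((j : ℕ) : ℂ) * ((t : ℕ) : ℂ) / N)

/-- Rounding to the nearest point of the lattice `δℤ + iδℤ`. -/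
noncomputable def roundLattice (δ : ℝ) (c : ℂ) : ℂ :=
  ⟨δ * ((round (c.re / δ) : ℤ) : ℝ), δ * ((round (c.im / δ) : ℤ) : ℝ)⟩

/-- State variables `u_i` of the `r`-th order ΣΔ quantizer with step `δ` run on input `y`
(with `y` indexed from time `1`; `u` at times `≤ 0` equals `0`). -/
noncomputable def sdState (δ : ℝ) (r : ℕ) (y : ℕ → ℂ) : ℕ → ℂ := fun n =>
  Nat.strongRecOn n (fun i ih =>
    if hi : i = 0 then 0
    else
      let w := y i + ∑ j ∈ Finset.Icc 1 r, ((-1 : ℂ)) ^ (j - 1) * (r.choose j : ℂ) *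
        (if h : 1 ≤ j then ih (i - j) (Nat.sub_lt (Nat.pos_of_ne_zero hi) h) else 0)
      w - roundLattice δ w)

/-- Output `q_i` of the `r`-th order ΣΔ quantizer. -/
noncomputable def sdQ (δ : ℝ) (r : ℕ) (y : ℕ → ℂ) (i : ℕ) : ℂ :=
  roundLattice δ (y i + ∑ j ∈ Finset.Icc 1 r, ((-1 : ℂ)) ^ (j - 1) * (r.choose j : ℂ) *
    sdState δ r y (i - j))

/-- Extension of a finite sequence `y : Fin m → ℂ` to time indices `1, …, m` (zero elsewhere). -/
def yExt {m : ℕ} (y : Fin m → ℂ) : ℕ → ℂ := fun i =>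
  if h : 1 ≤ i ∧ i ≤ m then y ⟨i - 1, by omega⟩ else 0

/-- The `r`-th order ΣΔ quantization of a finite sequence of complex measurements. -/
noncomputable def sdQuant (δ : ℝ) (r : ℕ) {m : ℕ} (y : Fin m → ℂ) : Fin m → ℂ :=
  fun i => sdQ δ r (yExt y) ((i : ℕ) + 1)

/-- Rounding to the nearest point of `δℤ`. -/
noncomputable def roundR (δ : ℝ) (x : ℝ) : ℝ := δ * ((round (x / δ) : ℤ) : ℝ)

noncomputable def sdStateR (δ : ℝ) (r : ℕ) (y : ℕ → ℝ) : ℕ → ℝ := fun n =>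
  Nat.strongRecOn n (fun i ih =>
    if hi : i = 0 then 0
    else
      let w := y i + ∑ j ∈ Finset.Icc 1 r, ((-1 : ℝ)) ^ (j - 1) * (r.choose j : ℝ) *
        (if h : 1 ≤ j then ih (i - j) (Nat.sub_lt (Nat.pos_of_ne_zero hi) h) else 0)
      w - roundR δ w)

noncomputable def sdQR (δ : ℝ) (r : ℕ) (y : ℕ → ℝ) (i : ℕ) : ℝ :=
  roundR δ (y i + ∑ j ∈ Finset.Icc 1 r, ((-1 : ℝ)) ^ (j - 1) * (r.choose j : ℝ) *
    sdStateR δ r y (i - j))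

def yExtR {m : ℕ} (y : Fin m → ℝ) : ℕ → ℝ := fun i =>
  if h : 1 ≤ i ∧ i ≤ m then y ⟨i - 1, by omega⟩ else 0

/-- The `r`-th order ΣΔ quantization of a finite sequence of real measurements. -/
noncomputable def sdQuantR (δ : ℝ) (r : ℕ) {m : ℕ} (y : Fin m → ℝ) : Fin m → ℝ :=
  fun i => sdQR δ r (yExtR y) ((i : ℕ) + 1)

theorem aux_sum (a t : ℝ) (n : ℕ) :
    ∑ k ∈ Finset.Icc 1 n, 2 * Real.sin (t / 2) * Real.cos ((a - (k : ℝ) + 1 / 2) * t)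
      = Real.sin (a * t) - Real.sin ((a - n) * t) := by
  induction n with
  | zero => simp
  | succ n ih =>
    rw [Finset.sum_Icc_succ_top (by omega), ih]
    have e1 : (a - n) * t = (a - ((n + 1 : ℕ) : ℝ) + 1 / 2) * t + t / 2 := by
      push_cast; ring
    have e2 : (a - ((n + 1 : ℕ) : ℝ)) * t = (a - ((n + 1 : ℕ) : ℝ) + 1 / 2) * t - t / 2 := by
      push_cast; ring
    rw [e1, e2, Real.sin_add, Real.sin_sub]
    ring

/-- the entries of the top right singular vector of `D⁻¹` sum to more than
`√(2m+1)/π`. -/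
theorem stmt10 (m : ℕ) (hm : 0 < m) :
    Real.sqrt (2 * (m : ℝ) + 1) / Real.pi <
      ∑ k ∈ Finset.Icc 1 m,
        Real.sqrt (2 / ((m : ℝ) + 1 / 2)) *
          Real.cos (((m : ℝ) - (k : ℝ) + 1 / 2) * Real.pi / (2 * (m : ℝ) + 1)) := by
  have hm1 : (1 : ℝ) ≤ m := by exact_mod_cast hm
  have hpi := Real.pi_pos
  obtain ⟨N, hN⟩ : ∃ N : ℝ, N = 2 * (m : ℝ) + 1 := ⟨_, rfl⟩
  have hN3 : 3 ≤ N := by linarith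
  have hN0 : 0 < N := by linarith
  obtain ⟨t, ht⟩ : ∃ t : ℝ, t = Real.pi / N := ⟨_, rfl⟩
  have htN : N * t = Real.pi := by rw [ht]; field_simp
  have ht0 : 0 < t := by rw [ht]; positivity
  have hsum := aux_sum m t m
  rw [← Finset.mul_sum, sub_self, zero_mul, Real.sin_zero, sub_zero] at hsum
  rw [← Finset.mul_sum, ← hN]
  have hS : ∑ k ∈ Finset.Icc 1 m, Real.cos (((m : ℝ) - (k : ℝ) + 1 / 2) * Real.pi / N)
      = ∑ k ∈ Finset.Icc 1 m, Real.cos (((m : ℝ) - (k : ℝ) + 1 / 2) * t) := by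
    refine Finset.sum_congr rfl fun k _ => ?_
    rw [ht, mul_div_assoc]
  rw [hS]
  set S := ∑ k ∈ Finset.Icc 1 m, Real.cos (((m : ℝ) - (k : ℝ) + 1 / 2) * t) with hSdef
  have hmt : (m : ℝ) * t = Real.pi / 2 - t / 2 := by rw [← htN, hN]; ring
  have htpi : t ≤ Real.pi / 3 := by nlinarith
  have hj := Real.mul_le_sin (x := (m : ℝ) * t) (by positivity) (by linarith)
  have hhalf : 1 / 2 < Real.sin (m * t) := by
    refine lt_of_lt_of_le ?_ hj
    rw [div_mul_eq_mul_div, lt_div_iff₀ hpi]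
    linarith
  have hsin0 : 0 < Real.sin (t / 2) := Real.sin_pos_of_pos_of_lt_pi (by linarith) (by linarith)
  have hsinlt : Real.sin (t / 2) < t / 2 := Real.sin_lt (by linarith)
  have hS0 : 0 < S := by
    by_contra h
    push Not at h
    nlinarith
  have hSN : N < 2 * Real.pi * S := by
    have h1 : 1 / 2 < t * S := by nlinarith
    rw [← htN]
    nlinarith
  have hsq : Real.sqrt (2 / ((m : ℝ) + 1 / 2)) = 2 / Real.sqrt N := by
    have : 2 / ((m : ℝ) + 1 / 2) = 2 ^ 2 / N := by rw [hN]; field_simp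
    rw [this, Real.sqrt_div (by norm_num), Real.sqrt_sq (by norm_num)]
  have hr : 0 < Real.sqrt N := Real.sqrt_pos.mpr hN0
  rw [hsq, div_mul_eq_mul_div, div_lt_div_iff₀ hpi hr, Real.mul_self_sqrt hN0.le]
  linarith
end

section
/- Let V ∈ ℝ^{m×l} have orthonormal columns, and suppose the first column w of V has entries w_k = √(2/(m+1/2)) · cos( (m−k+1/2)π/(2m+1) ), k = 1,…,m. Let e = (1,…,1)ᵀ ∈ ℝ^m and G = VVᵀ. If m ≥ π²·l, then ∑_{k=1}^m |(Ge)_k| ≥ 2l. -/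
open Matrix Finset

/-- if `V` has orthonormal columns whose first column is the top right
singular vector of `D⁻¹`, `G = VVᵀ`, and `m ≥ π² l`, then `∑_k |(Ge)_k| ≥ 2l`. -/
theorem stmt12 (m l : ℕ) (hl : 0 < l) (V : Matrix (Fin m) (Fin l) ℝ)
    (horth : Vᵀ * V = 1)
    (hw : ∀ i : Fin m, V i ⟨0, hl⟩ =
      Real.sqrt (2 / ((m : ℝ) + 1 / 2)) *
        Real.cos (((m : ℝ) - ((i : ℕ) + 1 : ℝ) + 1 / 2) * Real.pi / (2 * (m : ℝ) + 1)))
    (hml : Real.pi ^ 2 * l ≤ m) :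
    2 * (l : ℝ) ≤ ∑ k, |(V * Vᵀ).mulVec (fun _ => 1) k| := by
  have hm : (0:ℝ) ≤ m := Nat.cast_nonneg m
  set s : ℝ := Real.sqrt (2 / ((m : ℝ) + 1 / 2)) with hs
  have hspos : 0 < s := Real.sqrt_pos.mpr (by positivity)
  have hs2 : s ^ 2 = 2 / ((m : ℝ) + 1 / 2) := Real.sq_sqrt (by positivity)
  set c : Fin m → ℝ := fun i =>
    Real.cos (((m : ℝ) - ((i : ℕ) + 1 : ℝ) + 1 / 2) * Real.pi / (2 * (m : ℝ) + 1)) with hc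
  have hw' : ∀ i, V i ⟨0, hl⟩ = s * c i := hw
  have hc0 : ∀ i, 0 ≤ c i := by
    intro i
    have hi : ((i : ℕ) : ℝ) + 1 ≤ m := by exact_mod_cast i.2
    have hi0 : (0:ℝ) ≤ ((i : ℕ) : ℝ) := Nat.cast_nonneg _
    have hpi := Real.pi_pos
    apply Real.cos_nonneg_of_neg_pi_div_two_le_of_le
    · have : 0 ≤ ((m : ℝ) - ((i : ℕ) + 1 : ℝ) + 1 / 2) * Real.pi / (2 * (m : ℝ) + 1) := by
        apply div_nonneg _ (by positivity)
        apply mul_nonneg _ hpi.le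
        linarith
      linarith
    · rw [div_le_iff₀ (by positivity)]
      nlinarith
  have hc1 : ∀ i, c i ≤ 1 := fun i => Real.cos_le_one _
  set u : Fin m → ℝ := (V * Vᵀ).mulVec (fun _ => 1) with hu
  have h1 : Vᵀ.mulVec u = Vᵀ.mulVec (fun _ => 1) := by
    rw [hu, Matrix.mulVec_mulVec, ← Matrix.mul_assoc, horth, Matrix.one_mul]
  have h2 := congrFun h1 ⟨0, hl⟩
  simp only [Matrix.mulVec, dotProduct, Matrix.transpose_apply, hw', mul_one, mul_assoc] at h2
  rw [← Finset.mul_sum, ← Finset.mul_sum] at h2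
  have h3 := mul_left_cancel₀ hspos.ne' h2
  have h4 := congrFun (congrFun horth ⟨0, hl⟩) ⟨0, hl⟩
  simp only [Matrix.mul_apply, Matrix.transpose_apply, hw', Matrix.one_apply_eq] at h4
  have h5 : s ^ 2 * ∑ i, c i ^ 2 = 1 := by
    rw [← h4, Finset.mul_sum]
    exact Finset.sum_congr rfl fun i _ => by ring
  have h6 : ∑ i, c i ^ 2 = ((m : ℝ) + 1 / 2) / 2 := by
    rw [hs2] at h5
    field_simp at h5 ⊢
    linarith
  have h7 : ∑ i, c i ^ 2 ≤ ∑ i, c i :=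
    Finset.sum_le_sum fun i _ => by nlinarith [hc0 i, hc1 i]
  have h8 : ∑ i, c i * u i ≤ ∑ i, |u i| :=
    Finset.sum_le_sum fun i _ => by
      nlinarith [hc0 i, hc1 i, le_abs_self (u i), abs_nonneg (u i),
        mul_le_mul_of_nonneg_left (le_abs_self (u i)) (hc0 i),
        mul_le_mul_of_nonneg_right (hc1 i) (abs_nonneg (u i))]
  have h9 : (4:ℝ) * l ≤ m := by
    have hl0 : (0:ℝ) ≤ l := Nat.cast_nonneg l
    have h10 : (4:ℝ) ≤ Real.pi ^ 2 := by nlinarith [Real.pi_gt_three]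
    nlinarith [mul_le_mul_of_nonneg_right h10 hl0]
  linarith
end

section
/- Let Φ ∈ ℂ^{N×k} satisfy Φ*Φ = N·I_k and e^TΦ = 0 (e the all-ones vector of ℝ^N), with every row of Φ of ℓ₂-norm at most r₁√k (r₁ ≥ 1). Let V ∈ ℂ^{m×l} have orthonormal columns with every row of ℓ₂-norm at most r₂√(l/m) (r₂ ≥ 1), with m even and m ≥ l ≥ k. Let A = VV* − diag(VV*) be the off-diagonal part of VV*, and let F ∈ ℂ^{m×k} be the random matrix whose m rows are drawn independently and uniformly at random (with replacement) from the rows of Φ. Then there is an absolute constant c such that for every integer p ≥ 2, E ‖F*AF‖_{4p}^{4p} ≤ c^{2p} · k · m · p^{6p} · k^{2p} · l^{2p} · r₁^{8p} · r₂^{4p}, where ‖·‖_{4p} denotes the Schatten 4p-norm. -/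
open Matrix Finset

lemma h_scalar_mv (a b : ℝ) (r : ℕ) :
    (a - b) * (a ^ (2*r+1) - b ^ (2*r+1)) ≤ (2*r+1)/2 * ((a-b)^2 * (a^(2*r) + b^(2*r))) := by
  induction r with
  | zero => simp; nlinarith
  | succ r ih =>
    have h1 : 0 ≤ (a - b) * (a ^ (2*r+1) - b ^ (2*r+1)) := by
      have hm : StrictMono (fun x : ℝ => x ^ (2*r+1)) := Odd.strictMono_pow ⟨r, rfl⟩
      rcases le_total a b with h | h
      · exact mul_nonneg_of_nonpos_of_nonpos (by linarith) (by have := hm.monotone h; linarith)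
      · exact mul_nonneg (by linarith) (by have := hm.monotone h; linarith)
    have h2 : 0 ≤ (a^2 - b^2) * (a ^ (2*r) - b ^ (2*r)) := by
      rw [pow_mul, pow_mul]
      rcases le_total (a^2) (b^2) with h | h
      · exact mul_nonneg_of_nonpos_of_nonpos (by linarith)
          (by have := pow_le_pow_left₀ (sq_nonneg a) h r; linarith)
      · exact mul_nonneg (by linarith)
          (by have := pow_le_pow_left₀ (sq_nonneg b) h r; linarith)
    have e1 : a ^ (2*(r+1)) = a^2 * a^(2*r) := by ring
    have e2 : b ^ (2*(r+1)) = b^2 * b^(2*r) := by ring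
    have e3 : a ^ (2*(r+1)+1) = a^3 * a^(2*r) := by ring
    have e4 : b ^ (2*(r+1)+1) = b^3 * b^(2*r) := by ring
    have e5 : a ^ (2*r+1) = a * a^(2*r) := by ring
    have e6 : b ^ (2*r+1) = b * b^(2*r) := by ring
    rw [e1, e2, e3, e4]
    rw [e5, e6] at ih h1
    push_cast
    set x := a ^ (2*r)
    set y := b ^ (2*r)
    have i1 : (a-b) * (a^3*x - b^3*y) = (a^2+b^2)/2 * ((a-b)*(a*x-b*y)) + (a-b)^2/2*((a+b)*(a*x+b*y)) := by ring
    rw [i1]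
    have j1 := mul_le_mul_of_nonneg_left ih (show 0 ≤ (a^2+b^2)/2 by positivity)
    have j2 : (a-b)^2/2*((a+b)*(a*x+b*y)) ≤ (a-b)^2/2 * (2*(a^2*x+b^2*y)) :=
      mul_le_mul_of_nonneg_left (by nlinarith) (by positivity)
    have j3 : (a^2+b^2) * (x+y) ≤ 2*(a^2*x+b^2*y) := by nlinarith
    have j4 := mul_le_mul_of_nonneg_left j3 (show (0:ℝ) ≤ (2*r+1)/4*(a-b)^2 by positivity)
    nlinarith

lemma h_young (T x : ℝ) (n : ℕ) (hT : 0 ≤ T) (hx : 0 ≤ x) :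
    T * x ^ n ≤ x^(n+1)/4 + (4*T)^(n+1) := by
  rcases le_total (4*T) x with h | h
  · have : T * x^n ≤ x/4 * x^n := mul_le_mul_of_nonneg_right (by linarith) (by positivity)
    have h2 : 0 ≤ (4*T)^(n+1) := by positivity
    rw [pow_succ x]; nlinarith
  · have h1 : x^n ≤ (4*T)^n := pow_le_pow_left₀ hx h n
    have h3 : T * x^n ≤ (4*T) * (4*T)^n := by
      apply mul_le_mul (by linarith) h1 (by positivity) (by positivity)
    have h2 : 0 ≤ x^(n+1)/4 := by positivity
    rw [pow_succ (4*T)]; nlinarith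

lemma h_swap {ι α : Type*} [Fintype ι] [DecidableEq ι] [Fintype α] (i : ι)
    (h : (ι → α) → (ι → α) → ℝ) :
    ∑ σ : ι → α, ∑ n : α, h σ (Function.update σ i n)
      = ∑ σ : ι → α, ∑ n : α, h (Function.update σ i n) σ := by
  rw [← Fintype.sum_prod_type', ← Fintype.sum_prod_type']
  let e : (ι → α) × α → (ι → α) × α := fun z => (Function.update z.1 i z.2, z.1 i)
  have he : Function.Involutive e := by
    rintro ⟨σ, n⟩
    simp [e]
  refine Fintype.sum_equiv he.toPerm _ _ ?_
  rintro ⟨σ, n⟩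
  simp [e]

lemma h_sym {ι α : Type*} [Fintype ι] [DecidableEq ι] [Fintype α]
    (t u : (ι → α) → (ι → α) → ℝ) (C : ℝ)
    (h : ∀ σ τ, t σ τ + t τ σ ≤ C * (u σ τ + u τ σ)) :
    ∑ σ : ι → α, ∑ i, ∑ n : α, t σ (Function.update σ i n)
      ≤ C * ∑ σ : ι → α, ∑ i, ∑ n : α, u σ (Function.update σ i n) := by
  have key : ∀ i, ∑ σ : ι → α, ∑ n : α, t σ (Function.update σ i n)
      ≤ C * ∑ σ : ι → α, ∑ n : α, u σ (Function.update σ i n) := by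
    intro i
    have h1 := h_swap i t
    have h2 := h_swap i u
    have h3 : ∑ σ : ι → α, ∑ n : α, (t σ (Function.update σ i n) + t (Function.update σ i n) σ)
      ≤ ∑ σ : ι → α, ∑ n : α, C * (u σ (Function.update σ i n) + u (Function.update σ i n) σ) :=
      Finset.sum_le_sum fun σ _ => Finset.sum_le_sum fun n _ => h _ _
    simp only [Finset.sum_add_distrib, ← Finset.mul_sum] at h3
    rw [← h1, ← h2] at h3
    linarith
  rw [Finset.sum_comm]
  conv_rhs => rw [Finset.sum_comm]
  rw [Finset.mul_sum]
  exact Finset.sum_le_sum fun i _ => key i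

lemma h_spec {k : ℕ} (W Y : Matrix (Fin k) (Fin k) ℂ) (hW : W.IsHermitian) (hY : Y.IsHermitian) :
    ∃ (w y : Fin k → ℝ) (c : Fin k → Fin k → ℝ), (∀ i j, 0 ≤ c i j) ∧
      ∀ a b : ℕ, (trace (W ^ a * Y ^ b)).re = ∑ i, ∑ j, c i j * (w i ^ a * y j ^ b) := by
  have key : ∀ (X : Matrix (Fin k) (Fin k) ℂ), X.IsHermitian → ∃ (U : Matrix (Fin k) (Fin k) ℂ)
      (x : Fin k → ℝ), ∀ a : ℕ, X ^ a = U * diagonal (fun i => ((x i ^ a : ℝ) : ℂ)) * Uᴴ := by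
    intro X hX
    refine ⟨hX.eigenvectorUnitary, hX.eigenvalues, fun a => ?_⟩
    have hu : ((hX.eigenvectorUnitary : Matrix (Fin k) (Fin k) ℂ))ᴴ * (hX.eigenvectorUnitary : Matrix (Fin k) (Fin k) ℂ) = 1 := by
      have := Unitary.coe_star_mul_self hX.eigenvectorUnitary
      simpa [star_eq_conjTranspose] using this
    have hu' : (hX.eigenvectorUnitary : Matrix (Fin k) (Fin k) ℂ) * ((hX.eigenvectorUnitary : Matrix (Fin k) (Fin k) ℂ))ᴴ = 1 :=
      mul_eq_one_comm.mp hu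
    have hs : X = (hX.eigenvectorUnitary : Matrix (Fin k) (Fin k) ℂ) * diagonal (fun i => ((hX.eigenvalues i : ℝ) : ℂ)) * ((hX.eigenvectorUnitary : Matrix (Fin k) (Fin k) ℂ))ᴴ := by
      have := hX.spectral_theorem
      conv_lhs => rw [this]
      simp [Unitary.conjStarAlgAut_apply, star_eq_conjTranspose]
      rfl
    generalize (hX.eigenvectorUnitary : Matrix (Fin k) (Fin k) ℂ) = U at *
    generalize hX.eigenvalues = x at *
    induction a with
    | zero => simp [hu']
    | succ a ih =>
      rw [pow_succ, ih]
      conv_lhs => rw [hs]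
      have : U * diagonal (fun i => ((x i ^ a : ℝ) : ℂ)) * Uᴴ * (U * diagonal (fun i => (x i : ℂ)) * Uᴴ)
        = U * diagonal (fun i => ((x i ^ a : ℝ) : ℂ)) * (Uᴴ * U) * diagonal (fun i => (x i : ℂ)) * Uᴴ := by
        simp only [Matrix.mul_assoc]
      rw [this, hu, Matrix.mul_one, Matrix.mul_assoc U, diagonal_mul_diagonal]
      simp [pow_succ]
  obtain ⟨U, w, h1⟩ := key W hW
  obtain ⟨V, y, h2⟩ := key Y hY
  refine ⟨w, y, fun i j => Complex.normSq ((Uᴴ * V) i j), fun i j => Complex.normSq_nonneg _, fun a b => ?_⟩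
  rw [h1, h2]
  have e : trace (U * diagonal (fun i => ((w i ^ a : ℝ) : ℂ)) * Uᴴ * (V * diagonal (fun i => ((y i ^ b : ℝ) : ℂ)) * Vᴴ))
     = trace (diagonal (fun i => ((w i ^ a : ℝ) : ℂ)) * (Uᴴ * V) * (diagonal (fun i => ((y i ^ b : ℝ) : ℂ)) * (Uᴴ * V)ᴴ)) := by
    rw [Matrix.mul_assoc U, Matrix.mul_assoc U, trace_mul_comm]
    simp only [conjTranspose_mul, conjTranspose_conjTranspose, Matrix.mul_assoc]
  rw [e]
  generalize Uᴴ * V = Q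
  simp only [trace, diag_apply, Matrix.mul_apply (M := diagonal _ * Q), Complex.re_sum]
  refine Finset.sum_congr rfl fun i _ => Finset.sum_congr rfl fun j _ => ?_
  rw [diagonal_mul, diagonal_mul, conjTranspose_apply]
  have : ((w i ^ a : ℝ) : ℂ) * Q i j * (((y j ^ b : ℝ) : ℂ) * star (Q i j)) = ((w i ^ a * y j ^ b : ℝ) : ℂ) * (Q i j * star (Q i j)) := by push_cast; ring
  rw [this]
  have h3 : Q i j * star (Q i j) = ((Complex.normSq (Q i j) : ℝ) : ℂ) := by
    exact Complex.mul_conj _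
  rw [h3, ← Complex.ofReal_mul, Complex.ofReal_re]; ring

noncomputable def h_fro {a b : ℕ} (M : Matrix (Fin a) (Fin b) ℂ) : ℝ := ∑ i, ∑ j, ‖M i j‖^2

noncomputable def h_nsq {a : ℕ} (v : Fin a → ℂ) : ℝ := ∑ i, ‖v i‖^2

lemma h_fro_nonneg {a b : ℕ} (M : Matrix (Fin a) (Fin b) ℂ) : 0 ≤ h_fro M := by
  unfold h_fro; positivity

lemma h_nsq_nonneg {a : ℕ} (M : Fin a → ℂ) : 0 ≤ h_nsq M := by
  unfold h_nsq; positivity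

lemma h_fro_eq {a b : ℕ} (M : Matrix (Fin a) (Fin b) ℂ) : h_fro M = (trace (Mᴴ * M)).re := by
  simp only [h_fro, trace, diag_apply, Matrix.mul_apply, Complex.re_sum, conjTranspose_apply]
  rw [Finset.sum_comm]
  refine Finset.sum_congr rfl fun i _ => Finset.sum_congr rfl fun j _ => ?_
  rw [mul_comm]
  rw [show M j i * star (M j i) = ((Complex.normSq (M j i) : ℝ) : ℂ) from Complex.mul_conj _,
    Complex.ofReal_re, Complex.normSq_eq_norm_sq]

lemma h_norm_add (x y : ℂ) : ‖x + y‖^2 ≤ 2 * ‖x‖^2 + 2 * ‖y‖^2 := by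
  have := norm_add_le x y
  nlinarith [norm_nonneg (x+y), sq_nonneg (‖x‖-‖y‖), norm_nonneg x, norm_nonneg y]

lemma h_norm_sub (x y : ℂ) : ‖x - y‖^2 ≤ 2 * ‖x‖^2 + 2 * ‖y‖^2 := by
  have := norm_sub_le x y
  nlinarith [norm_nonneg (x-y), sq_nonneg (‖x‖-‖y‖), norm_nonneg x, norm_nonneg y]

lemma h_fro_add {a b : ℕ} (M M' : Matrix (Fin a) (Fin b) ℂ) :
    h_fro (M + M') ≤ 2 * h_fro M + 2 * h_fro M' := by
  simp only [h_fro, Finset.mul_sum, ← Finset.sum_add_distrib]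
  exact Finset.sum_le_sum fun i _ => Finset.sum_le_sum fun j _ => h_norm_add _ _

lemma h_fro_sub {a b : ℕ} (M M' : Matrix (Fin a) (Fin b) ℂ) :
    h_fro (M - M') ≤ 2 * h_fro M + 2 * h_fro M' := by
  simp only [h_fro, Finset.mul_sum, ← Finset.sum_add_distrib]
  exact Finset.sum_le_sum fun i _ => Finset.sum_le_sum fun j _ => h_norm_sub _ _

lemma h_nsq_sub {a : ℕ} (M M' : Fin a → ℂ) :
    h_nsq (M - M') ≤ 2 * h_nsq M + 2 * h_nsq M' := by
  simp only [h_nsq, Finset.mul_sum, ← Finset.sum_add_distrib]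
  exact Finset.sum_le_sum fun i _ => h_norm_sub _ _

lemma h_fro_vmv {a b : ℕ} (u : Fin a → ℂ) (v : Fin b → ℂ) :
    h_fro (vecMulVec u v) = h_nsq u * h_nsq v := by
  simp [h_fro, h_nsq, vecMulVec_apply, Finset.sum_mul_sum, mul_pow]

lemma h_nsq_star {a : ℕ} (u : Fin a → ℂ) : h_nsq (star u) = h_nsq u := by
  simp [h_nsq]

lemma h_vmv_mul {a b c : ℕ} (u : Fin a → ℂ) (v : Fin b → ℂ) (H : Matrix (Fin b) (Fin c) ℂ) :
    vecMulVec u v * H = vecMulVec u (v ᵥ* H) := by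
  ext i j
  simp [Matrix.mul_apply, vecMulVec_apply, vecMul, dotProduct, Finset.mul_sum, mul_assoc]

lemma h_fro_rows {a b : ℕ} (M : Matrix (Fin a) (Fin b) ℂ) : h_fro M = ∑ i, h_nsq (M i) := rfl

lemma h_mul_row {a b c : ℕ} (M : Matrix (Fin a) (Fin b) ℂ) (H : Matrix (Fin b) (Fin c) ℂ) (i : Fin a) :
    (M * H) i = (M i) ᵥ* H := by
  ext j; simp [Matrix.mul_apply, vecMul, dotProduct]

lemma h_pair {k : ℕ} (W Y : Matrix (Fin k) (Fin k) ℂ) (hW : W.IsHermitian) (hY : Y.IsHermitian)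
    (r : ℕ) :
    (trace ((W - Y) * W ^ (2*r+1))).re + (trace ((Y - W) * Y ^ (2*r+1))).re
      ≤ (2*r+1)/2 * (h_fro ((W - Y) * W ^ r) + h_fro ((Y - W) * Y ^ r)) := by
  obtain ⟨w, y, c, hc, h⟩ := h_spec W Y hW hY
  have e1 : (trace ((W - Y) * W ^ (2*r+1))).re = ∑ i, ∑ j, c i j * ((w i - y j) * w i ^ (2*r+1)) := by
    have : trace ((W - Y) * W ^ (2*r+1)) = trace (W^(2*r+2) * Y^0) - trace (W ^ (2*r+1) * Y^1) := by
      rw [Matrix.sub_mul, trace_sub, trace_mul_comm Y]; simp [pow_succ' W (2*r+1)]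
    rw [this, Complex.sub_re, h, h]
    simp only [← Finset.sum_sub_distrib]
    refine Finset.sum_congr rfl fun i _ => Finset.sum_congr rfl fun j _ => ?_
    ring
  have e2 : (trace ((Y - W) * Y ^ (2*r+1))).re = ∑ i, ∑ j, c i j * ((y j - w i) * y j ^ (2*r+1)) := by
    have : trace ((Y - W) * Y ^ (2*r+1)) = trace (W^0 * Y^(2*r+2)) - trace (W ^ 1 * Y^(2*r+1)) := by
      rw [Matrix.sub_mul, trace_sub]; simp [pow_succ' Y (2*r+1)]
    rw [this, Complex.sub_re, h, h]
    simp only [← Finset.sum_sub_distrib]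
    refine Finset.sum_congr rfl fun i _ => Finset.sum_congr rfl fun j _ => ?_
    ring
  have e3 : h_fro ((W - Y) * W ^ r) = ∑ i, ∑ j, c i j * ((w i - y j)^2 * w i ^ (2*r)) := by
    have : trace (((W - Y) * W ^ r)ᴴ * ((W - Y) * W ^ r)) = trace (W^(2*r+2) * Y^0) - trace (W ^ (2*r+1) * Y^1) - trace (W ^ (2*r+1) * Y^1) + trace (W^(2*r)*Y^2) := by
      rw [conjTranspose_mul, conjTranspose_pow, conjTranspose_sub, hW.eq, hY.eq]
      rw [trace_mul_comm, ← Matrix.mul_assoc, Matrix.mul_assoc (W - Y), ← pow_add, Matrix.mul_assoc, trace_mul_comm, Matrix.mul_assoc]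
      rw [show (W-Y)*(W-Y) = W*W - W*Y - Y*W + Y*Y by noncomm_ring]
      rw [show r + r = 2*r by ring]
      rw [Matrix.mul_add, Matrix.mul_sub, Matrix.mul_sub, trace_add, trace_sub, trace_sub]
      have a1 : W^(2*r) * (W*W) = W^(2*r+2) * Y^0 := by simp [pow_succ, Matrix.mul_assoc]
      have a2 : W^(2*r) * (W*Y) = W^(2*r+1) * Y^1 := by simp [pow_succ, Matrix.mul_assoc]
      have a3 : trace (W^(2*r) * (Y*W)) = trace (W^(2*r+1) * Y^1) := by
        rw [← Matrix.mul_assoc, trace_mul_comm, ← Matrix.mul_assoc, ← pow_succ', pow_one]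
      rw [a1, a2, a3, pow_two]
    rw [h_fro_eq, this, Complex.add_re, Complex.sub_re, Complex.sub_re, h, h, h]
    simp only [← Finset.sum_sub_distrib, ← Finset.sum_add_distrib]
    refine Finset.sum_congr rfl fun i _ => Finset.sum_congr rfl fun j _ => ?_
    ring
  have e4 : h_fro ((Y - W) * Y ^ r) = ∑ i, ∑ j, c i j * ((w i - y j)^2 * y j ^ (2*r)) := by
    have : trace (((Y - W) * Y ^ r)ᴴ * ((Y - W) * Y ^ r)) = trace (W^0*Y^(2*r+2)) - trace (W^1*Y ^ (2*r+1)) - trace (W^1*Y ^ (2*r+1)) + trace (W^2*Y^(2*r)) := by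
      rw [conjTranspose_mul, conjTranspose_pow, conjTranspose_sub, hW.eq, hY.eq]
      rw [trace_mul_comm, ← Matrix.mul_assoc, Matrix.mul_assoc (Y - W), ← pow_add, Matrix.mul_assoc, trace_mul_comm, Matrix.mul_assoc]
      rw [show (Y-W)*(Y-W) = Y*Y - W*Y - Y*W + W*W by noncomm_ring]
      rw [show r + r = 2*r by ring]
      rw [Matrix.mul_add, Matrix.mul_sub, Matrix.mul_sub, trace_add, trace_sub, trace_sub]
      have a1 : Y^(2*r) * (Y*Y) = W^0*Y^(2*r+2) := by simp [pow_succ, Matrix.mul_assoc]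
      have a2 : trace (Y^(2*r) * (Y*W)) = trace (W^1*Y^(2*r+1)) := by
        rw [← Matrix.mul_assoc, trace_mul_comm, ← pow_succ, pow_one]
      have a3 : trace (Y^(2*r) * (W*Y)) = trace (W^1*Y^(2*r+1)) := by
        rw [trace_mul_comm, Matrix.mul_assoc, ← pow_succ', pow_one]
      rw [a1, a2, a3, pow_two, trace_mul_comm (Y^(2*r))]
    rw [h_fro_eq, this, Complex.add_re, Complex.sub_re, Complex.sub_re, h, h, h]
    simp only [← Finset.sum_sub_distrib, ← Finset.sum_add_distrib]
    refine Finset.sum_congr rfl fun i _ => Finset.sum_congr rfl fun j _ => ?_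
    ring
  rw [e1, e2, e3, e4]
  simp only [← Finset.sum_add_distrib, Finset.mul_sum]
  refine Finset.sum_le_sum fun i _ => Finset.sum_le_sum fun j _ => ?_
  have := mul_le_mul_of_nonneg_left (h_scalar_mv (w i) (y j) r) (hc i j)
  nlinarith

lemma h_ES {k m N : ℕ} (X : (Fin m → Fin N) → Matrix (Fin k) (Fin k) ℂ)
    (hX : ∀ σ, (X σ).IsHermitian) (r : ℕ) :
    ∑ σ, ∑ i, ∑ n, (trace ((X σ - X (Function.update σ i n)) * X σ ^ (2*r+1))).re
      ≤ (2*r+1)/2 * ∑ σ, ∑ i, ∑ n, h_fro ((X σ - X (Function.update σ i n)) * X σ ^ r) :=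
  h_sym (fun σ τ => (trace ((X σ - X τ) * X σ ^ (2*r+1))).re)
    (fun σ τ => h_fro ((X σ - X τ) * X σ ^ r)) _ (fun σ τ => h_pair _ _ (hX σ) (hX τ) r)

lemma h_vpair {E : Type*} [NormedAddCommGroup E] [InnerProductSpace ℝ E] (g h : E) (r : ℕ) :
    (inner ℝ (g - h) g : ℝ) * ‖g‖^(2*r) + (inner ℝ (h - g) h : ℝ) * ‖h‖^(2*r)
     ≤ (2*r+1)/2 * (‖g - h‖^2 * ‖g‖^(2*r) + ‖h - g‖^2 * ‖h‖^(2*r)) := by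
  have s := h_scalar_mv ‖g‖ ‖h‖ r
  have e1 : ‖g - h‖^2 = ‖g‖^2 - 2 * inner ℝ g h + ‖h‖^2 := norm_sub_sq_real g h
  have e2 : ‖h - g‖^2 = ‖g - h‖^2 := by rw [norm_sub_rev]
  have e3 : (inner ℝ (g - h) g : ℝ) = ‖g‖^2 - inner ℝ g h := by
    rw [inner_sub_left, real_inner_self_eq_norm_sq, real_inner_comm]
  have e4 : (inner ℝ (h - g) h : ℝ) = ‖h‖^2 - inner ℝ g h := by
    rw [inner_sub_left, real_inner_self_eq_norm_sq]
  have cs : inner ℝ g h ≤ ‖g‖ * ‖h‖ := real_inner_le_norm g h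
  rw [e2, e1, e3, e4]
  have p1 : 0 ≤ ‖g‖^(2*r) := by positivity
  have p2 : 0 ≤ ‖h‖^(2*r) := by positivity
  rw [pow_succ, pow_succ] at s
  set a := ‖g‖^(2*r)
  set b := ‖h‖^(2*r)
  set x := ‖g‖
  set y := ‖h‖
  set z := inner ℝ g h
  have q : 0 ≤ 2*(r:ℝ) * ((a+b) * (x*y - z)) := by
    have := sub_nonneg.mpr cs; positivity
  nlinarith

lemma h_gmom {E : Type*} [NormedAddCommGroup E] [InnerProductSpace ℝ E] {m N : ℕ} (hN : 0 < N)
    (ψ : Fin m → Fin N → E) (s : Fin m → ℝ) (S : ℝ) (h0 : ∀ i, ∑ n, ψ i n = 0)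
    (hs : ∀ i n, ‖ψ i n‖^2 ≤ s i) (hS : ∑ i, s i ≤ S) (r : ℕ) :
    ∑ σ : Fin m → Fin N, (‖∑ i, ψ i (σ i)‖^2)^(r+1)
      ≤ 2 * (Fintype.card (Fin m → Fin N) : ℝ) * (16 * (r+1) * S)^(r+1) := by
  set G : (Fin m → Fin N) → E := fun σ => ∑ i, ψ i (σ i) with hG
  have hs0 : ∀ i, 0 ≤ s i := fun i => le_trans (by positivity) (hs i ⟨0, hN⟩)
  have hS0 : 0 ≤ S := le_trans (Finset.sum_nonneg fun i _ => hs0 i) hS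
  have hd : ∀ σ i n, G σ - G (Function.update σ i n) = ψ i (σ i) - ψ i n := by
    intro σ i n
    simp only [hG, ← Finset.sum_sub_distrib]
    rw [Finset.sum_eq_single i]
    · simp
    · intro j _ hj; simp [hj]
    · simp
  have es := h_sym (fun σ τ => (inner ℝ (G σ - G τ) (G σ) : ℝ) * ‖G σ‖^(2*r))
    (fun σ τ => ‖G σ - G τ‖^2 * ‖G σ‖^(2*r)) ((2*r+1)/2) (fun σ τ => h_vpair _ _ r)
  have e1 : ∀ σ, ∑ i, ∑ n, (inner ℝ (G σ - G (Function.update σ i n)) (G σ) : ℝ) * ‖G σ‖^(2*r)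
      = N * (‖G σ‖^2)^(r+1) := by
    intro σ
    simp only [hd, ← Finset.sum_mul, ← sum_inner, Finset.sum_sub_distrib, h0]
    simp only [Finset.sum_const, Finset.card_univ, Fintype.card_fin]
    rw [smul_zero, sub_zero, ← Finset.smul_sum]
    rw [← Nat.cast_smul_eq_nsmul ℝ, inner_smul_left]
    change (N:ℝ) * inner ℝ (G σ) (G σ) * _ = _
    rw [real_inner_self_eq_norm_sq, pow_mul]; ring
  have e2 : ∀ σ, ∑ i, ∑ n, ‖G σ - G (Function.update σ i n)‖^2 * ‖G σ‖^(2*r)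
      ≤ N * (4 * S) * (‖G σ‖^2)^r := by
    intro σ
    simp only [hd, ← Finset.sum_mul]
    rw [pow_mul]
    apply mul_le_mul_of_nonneg_right _ (by positivity)
    calc ∑ i, ∑ n, ‖ψ i (σ i) - ψ i n‖^2 ≤ ∑ i, ∑ n : Fin N, 4 * s i := by
          refine Finset.sum_le_sum fun i _ => Finset.sum_le_sum fun n _ => ?_
          have := norm_sub_le (ψ i (σ i)) (ψ i n)
          have h1 := hs i (σ i)
          have h2 := hs i n
          nlinarith [norm_nonneg (ψ i (σ i) - ψ i n), sq_nonneg (‖ψ i (σ i)‖-‖ψ i n‖)]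
      _ = N * (4 * ∑ i, s i) := by
          simp [Finset.mul_sum]
      _ ≤ _ := by gcongr
  simp only [e1] at es
  have es2 : ∑ σ, (N:ℝ) * (‖G σ‖^2)^(r+1) ≤ (2*r+1)/2 * ∑ σ, N * (4 * S) * (‖G σ‖^2)^r :=
    es.trans (mul_le_mul_of_nonneg_left (Finset.sum_le_sum fun σ _ => e2 σ) (by positivity))
  rw [← Finset.mul_sum, ← Finset.mul_sum] at es2
  have es3 : ∑ σ, (‖G σ‖^2)^(r+1) ≤ (2*r+1)/2 * (4 * S * ∑ σ, (‖G σ‖^2)^r) := by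
    have hN' : (0:ℝ) < N := by exact_mod_cast hN
    refine le_of_mul_le_mul_left ?_ hN'
    linarith
  have es4 : (2*r+1)/2 * (4 * S * ∑ σ, (‖G σ‖^2)^r)
      ≤ ∑ σ : Fin m → Fin N, ((‖G σ‖^2)^(r+1)/4 + (16 * (r+1) * S)^(r+1)) := by
    rw [Finset.mul_sum, Finset.mul_sum]
    refine Finset.sum_le_sum fun σ _ => ?_
    have := h_young (4 * (r+1) * S) (‖G σ‖^2) r (by positivity) (by positivity)
    rw [show 4 * (4 * ((r:ℝ)+1) * S) = 16 * (r+1) * S by ring] at this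
    refine le_trans ?_ this
    have : 0 ≤ S * (‖G σ‖^2)^r := by positivity
    nlinarith
  rw [Finset.sum_add_distrib, ← Finset.sum_div] at es4
  simp only [Finset.sum_const, Finset.card_univ, nsmul_eq_mul] at es4
  have hp : 0 ≤ (Fintype.card (Fin m → Fin N) : ℝ) * (16 * (r+1) * S)^(r+1) := by positivity
  change ∑ σ, (‖G σ‖^2)^(r+1) ≤ _
  linarith

noncomputable def h_P {N k : ℕ} (Φ : Matrix (Fin N) (Fin k) ℂ) (a : Fin N) :
    Matrix (Fin k) (Fin k) ℂ := vecMulVec (star (Φ a)) (Φ a)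

lemma h_P_sum {N k : ℕ} (Φ : Matrix (Fin N) (Fin k) ℂ) : ∑ a, h_P Φ a = Φᴴ * Φ := by
  ext i j
  simp [h_P, Matrix.sum_apply, vecMulVec_apply, Matrix.mul_apply]

lemma h_gram {m N k : ℕ} (Φ : Matrix (Fin N) (Fin k) ℂ) (σ : Fin m → Fin N) :
    (Φ.submatrix σ id)ᴴ * (Φ.submatrix σ id) = ∑ i, h_P Φ (σ i) := by
  ext i j
  simp [h_P, Matrix.sum_apply, vecMulVec_apply, Matrix.mul_apply]

lemma h_fro_pow {a k : ℕ} (F : Matrix (Fin a) (Fin k) ℂ) (X : Matrix (Fin k) (Fin k) ℂ)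
    (hX : X.IsHermitian) (r : ℕ) :
    h_fro (F * X ^ r) = (trace ((Fᴴ * F) * X ^ (2*r))).re := by
  rw [h_fro_eq, conjTranspose_mul, conjTranspose_pow, hX.eq, Matrix.mul_assoc, trace_mul_comm,
    Matrix.mul_assoc, Matrix.mul_assoc, ← pow_add, two_mul, ← Matrix.mul_assoc]

lemma h_fro_phi {N k : ℕ} (Φ : Matrix (Fin N) (Fin k) ℂ)
    (hΦ : Φᴴ * Φ = (N : ℂ) • (1 : Matrix (Fin k) (Fin k) ℂ)) (X : Matrix (Fin k) (Fin k) ℂ)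
    (hX : X.IsHermitian) (r : ℕ) :
    h_fro (Φ * X ^ r) = N * (trace (X ^ (2*r))).re := by
  rw [h_fro_pow _ _ hX, hΦ, Matrix.smul_mul, Matrix.one_mul, trace_smul]
  simp

lemma h_spec1 {k : ℕ} (Y : Matrix (Fin k) (Fin k) ℂ) (hY : Y.IsHermitian) :
    ∃ (y : Fin k → ℝ) (c : Fin k → Fin k → ℝ), (∀ i j, 0 ≤ c i j) ∧
      (∑ i, ∑ j, c i j = k) ∧
      ∀ a : ℕ, (trace (Y ^ a)).re = ∑ i, ∑ j, c i j * y i ^ a := by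
  obtain ⟨w, y, c, hc, h⟩ := h_spec Y Y hY hY
  refine ⟨w, c, hc, ?_, fun a => ?_⟩
  · have := h 0 0
    simpa using this.symm
  · have := h a 0
    simpa using this

lemma h_Ymom {m N k : ℕ} (hN : 0 < N) (Φ : Matrix (Fin N) (Fin k) ℂ)
    (hΦ : Φᴴ * Φ = (N : ℂ) • (1 : Matrix (Fin k) (Fin k) ℂ)) (B : ℝ)
    (hB : ∀ a, h_nsq (Φ a) ≤ B) (r : ℕ) :
    ∑ σ : Fin m → Fin N, (trace (((Φ.submatrix σ id)ᴴ * (Φ.submatrix σ id))^(2*r+2))).re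
      ≤ 4 * (Fintype.card (Fin m → Fin N) : ℝ) * (k * (4 * (m + 2*(r+1)*B))^(2*r+2)) := by
  set Y : (Fin m → Fin N) → Matrix (Fin k) (Fin k) ℂ :=
    fun σ => (Φ.submatrix σ id)ᴴ * (Φ.submatrix σ id) with hYdef
  have hB0 : 0 ≤ B := le_trans (h_nsq_nonneg _) (hB ⟨0, hN⟩)
  have hY : ∀ σ, (Y σ).IsHermitian := fun σ => isHermitian_conjTranspose_mul_self _
  have hYs : ∀ σ, Y σ = ∑ i, h_P Φ (σ i) := fun σ => h_gram Φ σ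
  have hd : ∀ σ i n, Y σ - Y (Function.update σ i n) = h_P Φ (σ i) - h_P Φ n := by
    intro σ i n
    rw [hYs, hYs, ← Finset.sum_sub_distrib]
    rw [Finset.sum_eq_single i]
    · simp
    · intro j _ hj; simp [hj]
    · simp
  have es := h_ES Y hY r
  have e1 : ∀ σ, ∑ i, ∑ n, (trace ((Y σ - Y (Function.update σ i n)) * Y σ ^ (2*r+1))).re
     = N * ((trace (Y σ ^ (2*r+2))).re - m * (trace (Y σ ^ (2*r+1))).re) := by
    intro σ
    simp only [← Complex.re_sum, ← trace_sum, ← Matrix.sum_mul]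
    have : ∑ i, ∑ n, (Y σ - Y (Function.update σ i n)) = (N:ℂ) • (Y σ - (m:ℂ) • 1) := by
      simp only [hd, Finset.sum_sub_distrib, h_P_sum, hΦ, Finset.sum_const, Finset.card_univ, Fintype.card_fin]
      rw [← Finset.smul_sum, ← hYs, smul_sub]
      rw [← Nat.cast_smul_eq_nsmul ℂ, ← Nat.cast_smul_eq_nsmul ℂ, smul_comm]
    rw [this, Matrix.smul_mul, Matrix.sub_mul, ← pow_succ', Matrix.smul_mul, Matrix.one_mul,
      trace_smul, trace_sub, trace_smul]
    simp
  have hPn : ∀ a (H : Matrix (Fin k) (Fin k) ℂ), h_fro (h_P Φ a * H) ≤ B * h_nsq (Φ a ᵥ* H) := by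
    intro a H
    rw [h_P, h_vmv_mul, h_fro_vmv, h_nsq_star]
    exact mul_le_mul_of_nonneg_right (hB a) (h_nsq_nonneg _)
  have e2 : ∀ σ, ∑ i, ∑ n, h_fro ((Y σ - Y (Function.update σ i n)) * Y σ ^ r)
     ≤ N * (2 * B * ((trace (Y σ ^ (2*r+1))).re + m * (trace (Y σ ^ (2*r))).re)) := by
    intro σ
    calc ∑ i, ∑ n, h_fro ((Y σ - Y (Function.update σ i n)) * Y σ ^ r)
        ≤ ∑ i, ∑ n, (2 * (B * h_nsq (Φ (σ i) ᵥ* Y σ ^ r)) + 2 * (B * h_nsq (Φ n ᵥ* Y σ ^ r))) := by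
          refine Finset.sum_le_sum fun i _ => Finset.sum_le_sum fun n _ => ?_
          rw [hd, Matrix.sub_mul]
          refine (h_fro_sub _ _).trans ?_
          have := hPn (σ i) (Y σ ^ r)
          have := hPn n (Y σ ^ r)
          linarith
      _ = 2 * B * (N * h_fro (Φ.submatrix σ id * Y σ ^ r) + m * h_fro (Φ * Y σ ^ r)) := by
          simp only [Finset.sum_add_distrib, ← Finset.mul_sum, h_fro_rows, h_mul_row]
          simp only [Finset.sum_const, Finset.card_univ, Fintype.card_fin, ← Finset.mul_sum, nsmul_eq_mul]
          have : ∀ i, (Φ.submatrix σ id) i = Φ (σ i) := fun i => rfl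
          simp only [this]
          ring
      _ = _ := by
          rw [h_fro_phi Φ hΦ _ (hY σ), h_fro_pow _ _ (hY σ)]
          change 2 * B * (N * (trace (Y σ * Y σ ^ (2*r))).re + _) = _
          rw [← pow_succ']; ring
  simp only [e1] at es
  have es2 : ∑ σ, (N:ℝ) * ((trace (Y σ ^ (2*r+2))).re - m * (trace (Y σ ^ (2*r+1))).re)
     ≤ (2*r+1)/2 * ∑ σ, N * (2 * B * ((trace (Y σ ^ (2*r+1))).re + m * (trace (Y σ ^ (2*r))).re)) :=
    es.trans (mul_le_mul_of_nonneg_left (Finset.sum_le_sum fun σ _ => e2 σ) (by positivity))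
  rw [← Finset.mul_sum, ← Finset.mul_sum] at es2
  have es3 : ∑ σ, ((trace (Y σ ^ (2*r+2))).re - m * (trace (Y σ ^ (2*r+1))).re)
     ≤ ∑ σ, (2*r+1)/2 * (2 * B * ((trace (Y σ ^ (2*r+1))).re + m * (trace (Y σ ^ (2*r))).re)) := by
    have hN' : (0:ℝ) < N := by exact_mod_cast hN
    refine le_of_mul_le_mul_left ?_ hN'
    rw [← Finset.mul_sum]
    linarith
  set R : ℝ := m + 2*(r+1)*B with hR
  have hR0 : 0 ≤ R := by positivity
  have hpt : ∀ σ, m * (trace (Y σ ^ (2*r+1))).re + (2*r+1)/2 * (2 * B * ((trace (Y σ ^ (2*r+1))).re + m * (trace (Y σ ^ (2*r))).re))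
     ≤ (trace (Y σ ^ (2*r+2))).re / 2 + k * (2 * (4*R)^(2*r+2)) := by
    intro σ
    obtain ⟨y, c, hc, hk, h⟩ := h_spec1 (Y σ) (hY σ)
    rw [h, h, h, ← hk]
    simp only [Finset.mul_sum, Finset.sum_mul, Finset.sum_div, ← Finset.sum_add_distrib]
    refine Finset.sum_le_sum fun i _ => Finset.sum_le_sum fun j _ => ?_
    have y1 := h_young R |y i| (2*r+1) hR0 (abs_nonneg _)
    have y2 := h_young (R^2) (|y i|^2) r (by positivity) (by positivity)
    have y3 : (4*R^2)^(r+1) ≤ (4*R)^(2*r+2) := by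
      rw [show 2*r+2 = 2*(r+1) by ring, pow_mul]
      apply pow_le_pow_left₀ (by positivity); nlinarith [sq_nonneg R]
    have a1 : y i ^ (2*r+1) ≤ |y i|^(2*r+1) := by rw [← abs_pow]; exact le_abs_self _
    have a2 : y i ^ (2*r) = |y i|^(2*r) := by rw [pow_mul, pow_mul, sq_abs]
    have a3 : y i ^ (2*r+2) = |y i|^(2*r+2) := by rw [show 2*r+2 = 2*(r+1) by ring, pow_mul, pow_mul, sq_abs]
    rw [← pow_mul, ← pow_mul, show 2*(r+1) = 2*r+2 by ring] at y2
    rw [show 2*r+1+1 = 2*r+2 by ring] at y1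
    have key : (m + (2*r+1)*B) * y i^(2*r+1) + (2*r+1)*B*m * y i^(2*r) ≤ y i^(2*r+2)/2 + 2*(4*R)^(2*r+2) := by
      have b1 : (m + (2*r+1)*B) * y i^(2*r+1) ≤ R * |y i|^(2*r+1) := by
        apply (mul_le_mul_of_nonneg_left a1 (by positivity)).trans
        apply mul_le_mul_of_nonneg_right _ (by positivity)
        rw [hR]; nlinarith
      have b2 : (2*r+1)*B*m * y i^(2*r) ≤ R^2 * |y i|^(2*r) := by
        rw [a2]
        apply mul_le_mul_of_nonneg_right _ (by positivity)
        have c1 : (2*r+1)*B ≤ R := by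
          have : (0:ℝ) ≤ m := by positivity
          rw [hR]; nlinarith
        have c2 : (m:ℝ) ≤ R := by
          rw [hR]; have : 0 ≤ 2*((r:ℝ)+1)*B := by positivity
          linarith
        rw [pow_two]
        exact mul_le_mul c1 c2 (by positivity) hR0
      rw [a3]
      linarith
    have := mul_le_mul_of_nonneg_left key (hc i j)
    linarith
  have es4 : ∑ σ, (trace (Y σ ^ (2*r+2))).re ≤ ∑ σ, ((trace (Y σ ^ (2*r+2))).re / 2 + k * (2 * (4*R)^(2*r+2))) := by
    rw [Finset.sum_sub_distrib] at es3
    have := Finset.sum_le_sum fun σ (_ : σ ∈ Finset.univ) => hpt σ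
    rw [Finset.sum_add_distrib] at this
    linarith
  rw [Finset.sum_add_distrib, ← Finset.sum_div] at es4
  simp only [Finset.sum_const, Finset.card_univ, nsmul_eq_mul] at es4
  linarith

lemma h_Xupd {m N k : ℕ} (Φ : Matrix (Fin N) (Fin k) ℂ) (A : Matrix (Fin m) (Fin m) ℂ)
    (hA : A.IsHermitian) (hA0 : ∀ i, A i i = 0) (σ : Fin m → Fin N) (i : Fin m) (n : Fin N) :
    (Φ.submatrix σ id)ᴴ * A * (Φ.submatrix σ id) -
      (Φ.submatrix (Function.update σ i n) id)ᴴ * A * (Φ.submatrix (Function.update σ i n) id)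
    = vecMulVec (star (Φ (σ i) - Φ n)) ((A * Φ.submatrix σ id) i)
      + vecMulVec (star ((A * Φ.submatrix σ id) i)) (Φ (σ i) - Φ n) := by
  set F := Φ.submatrix σ id with hF
  set u := Φ (σ i) - Φ n with hu
  set E : Matrix (Fin m) (Fin k) ℂ := vecMulVec (Pi.single i 1) u with hE
  have hF' : Φ.submatrix (Function.update σ i n) id = F - E := by
    ext j t
    by_cases hj : j = i
    · subst hj; simp [hF, hE, hu, vecMulVec_apply]
    · simp [hF, hE, vecMulVec_apply, hj]
  have h1 : Eᴴ * A = vecMulVec (star u) (A i) := by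
    ext s j
    rw [Matrix.mul_apply, Finset.sum_eq_single i]
    · simp [hE, vecMulVec_apply]
    · intro b _ hb; simp [hE, vecMulVec_apply, hb]
    · simp
  have h2 : Eᴴ * A * F = vecMulVec (star u) ((A * F) i) := by
    rw [h1, h_vmv_mul, h_mul_row]
  have h3 : Eᴴ * A * E = 0 := by
    rw [h1, h_vmv_mul]
    have : A i ᵥ* E = 0 := by
      ext t
      rw [vecMul, dotProduct, Finset.sum_eq_single i]
      · simp [hA0]
      · intro b _ hb; simp [hE, vecMulVec_apply, hb]
      · simp
    rw [this]; ext s t; simp [vecMulVec_apply]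
  have h4 : Fᴴ * A * E = vecMulVec (star ((A * F) i)) u := by
    have : Fᴴ * A * E = (Eᴴ * A * F)ᴴ := by
      simp [conjTranspose_mul, hA.eq, Matrix.mul_assoc]
    rw [this, h2]
    ext s t; simp [vecMulVec_apply, mul_comm]
  rw [hF', conjTranspose_sub, Matrix.sub_mul, Matrix.sub_mul, Matrix.mul_sub, Matrix.mul_sub, h2, h3, h4]
  abel

lemma h_Xmain {m N k : ℕ} (hN : 0 < N) (Φ : Matrix (Fin N) (Fin k) ℂ)
    (hΦ : Φᴴ * Φ = (N : ℂ) • (1 : Matrix (Fin k) (Fin k) ℂ))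
    (h0' : ∀ t, ∑ n, Φ n t = 0) (B : ℝ)
    (hB : ∀ a, h_nsq (Φ a) ≤ B) (A : Matrix (Fin m) (Fin m) ℂ)
    (hA : A.IsHermitian) (hA0 : ∀ i, A i i = 0) (β : ℝ)
    (hAβ : ∀ W : Matrix (Fin m) (Fin k) ℂ, h_fro (A * W) ≤ 2 * (trace (Wᴴ * A * W)).re + 4 * β * h_fro W)
    (X Y : (Fin m → Fin N) → Matrix (Fin k) (Fin k) ℂ)
    (hXd : X = fun σ => (Φ.submatrix σ id)ᴴ * A * (Φ.submatrix σ id))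
    (hYd : Y = fun σ => (Φ.submatrix σ id)ᴴ * (Φ.submatrix σ id))
    (γ : (Fin m → Fin N) → ℝ) (hγ : ∀ σ i, h_nsq ((A * Φ.submatrix σ id) i) ≤ γ σ)
    (r : ℕ) :
    ∑ σ, (trace (X σ ^ (2*r+2))).re ≤ ∑ σ, (2*r+1)/2 * (8 * B * (trace (X σ ^ (2*r+1))).re
      + 16 * B * β * (trace (Y σ * X σ ^ (2*r))).re
      + 2 * γ σ * ((trace (Y σ * X σ ^ (2*r))).re + m * (trace (X σ ^ (2*r))).re)) := by
  have hB0 : 0 ≤ B := le_trans (h_nsq_nonneg _) (hB ⟨0, hN⟩)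
  have hX : ∀ σ, (X σ).IsHermitian := by
    intro σ
    rw [hXd]
    exact isHermitian_conjTranspose_mul_mul _ hA
  have hd : ∀ σ i n, X σ - X (Function.update σ i n) = vecMulVec (star (Φ (σ i) - Φ n)) ((A * Φ.submatrix σ id) i)
      + vecMulVec (star ((A * Φ.submatrix σ id) i)) (Φ (σ i) - Φ n) := by
    intro σ i n
    rw [hXd]; exact h_Xupd Φ A hA hA0 σ i n
  have es := h_ES X hX r
  have e1 : ∀ σ, ∑ i, ∑ n, (trace ((X σ - X (Function.update σ i n)) * X σ ^ (2*r+1))).re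
     = N * (2 * (trace (X σ ^ (2*r+2))).re) := by
    intro σ
    simp only [← Complex.re_sum, ← trace_sum, ← Matrix.sum_mul]
    have h0'' : ∀ t, ∑ n, (starRingEnd ℂ) (Φ n t) = 0 := fun t => by
      rw [← map_sum, h0', map_zero]
    have c1 : ∑ i, vecMulVec (star (Φ (σ i))) ((A * Φ.submatrix σ id) i) = X σ := by
      rw [hXd]
      simp only [Matrix.mul_assoc]
      generalize A * Φ.submatrix σ id = G
      ext s t
      simp [Matrix.sum_apply, vecMulVec_apply, Matrix.mul_apply]
    have c2 : ∑ i, vecMulVec (star ((A * Φ.submatrix σ id) i)) (Φ (σ i)) = X σ := by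
      have : X σ = (A * Φ.submatrix σ id)ᴴ * Φ.submatrix σ id := by
        rw [hXd, conjTranspose_mul, hA.eq]
      rw [this]
      generalize A * Φ.submatrix σ id = G
      ext s t
      simp [Matrix.sum_apply, vecMulVec_apply, Matrix.mul_apply]
    have : ∑ i, ∑ n, (X σ - X (Function.update σ i n)) = (N:ℂ) • (X σ + X σ) := by
      rw [show X σ + X σ = ∑ i, vecMulVec (star (Φ (σ i))) ((A * Φ.submatrix σ id) i)
        + ∑ i, vecMulVec (star ((A * Φ.submatrix σ id) i)) (Φ (σ i)) by rw [c1, c2]]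
      rw [← Finset.sum_add_distrib, Finset.smul_sum]
      refine Finset.sum_congr rfl fun i _ => ?_
      simp only [hd]
      generalize (A * Φ.submatrix σ id) i = g
      ext s t
      simp only [Matrix.sum_apply, Matrix.add_apply, vecMulVec_apply, Matrix.smul_apply, Pi.star_apply, Pi.sub_apply,
        star_sub, sub_mul, mul_sub, Finset.sum_add_distrib, Finset.sum_sub_distrib, ← Finset.sum_mul, ← Finset.mul_sum, h0', RCLike.star_def, h0'']
      simp
      ring
    rw [this, Matrix.smul_mul, Matrix.add_mul, ← pow_succ', trace_smul, trace_add]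
    simp; left; ring
  have e2 : ∀ σ, ∑ i, ∑ n, h_fro ((X σ - X (Function.update σ i n)) * X σ ^ r)
     ≤ N * (2 * (8 * B * (trace (X σ ^ (2*r+1))).re
      + 16 * B * β * (trace (Y σ * X σ ^ (2*r))).re
      + 2 * γ σ * ((trace (Y σ * X σ ^ (2*r))).re + m * (trace (X σ ^ (2*r))).re))) := by
    intro σ
    have hγ0 : ∀ i : Fin m, 0 ≤ γ σ := fun i => le_trans (h_nsq_nonneg _) (hγ σ i)
    calc ∑ i, ∑ n, h_fro ((X σ - X (Function.update σ i n)) * X σ ^ r)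
        ≤ ∑ i, ∑ n, (2 * (4 * B * h_nsq ((A * Φ.submatrix σ id) i ᵥ* X σ ^ r)) +
            2 * (γ σ * (2 * h_nsq (Φ (σ i) ᵥ* X σ ^ r) + 2 * h_nsq (Φ n ᵥ* X σ ^ r)))) := by
          refine Finset.sum_le_sum fun i _ => Finset.sum_le_sum fun n _ => ?_
          rw [hd, Matrix.add_mul]
          refine (h_fro_add _ _).trans ?_
          rw [h_vmv_mul, h_vmv_mul, h_fro_vmv, h_fro_vmv, h_nsq_star, h_nsq_star]
          have q1 : h_nsq (Φ (σ i) - Φ n) ≤ 4 * B := by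
            have := h_nsq_sub (Φ (σ i)) (Φ n)
            have := hB (σ i)
            have := hB n
            linarith
          have q2 : h_nsq ((Φ (σ i) - Φ n) ᵥ* X σ ^ r) ≤ 2 * h_nsq (Φ (σ i) ᵥ* X σ ^ r) + 2 * h_nsq (Φ n ᵥ* X σ ^ r) := by
            rw [sub_vecMul]; exact h_nsq_sub _ _
          have q3 := mul_le_mul_of_nonneg_right q1 (h_nsq_nonneg ((A * Φ.submatrix σ id) i ᵥ* X σ ^ r))
          have q4 := mul_le_mul (hγ σ i) q2 (h_nsq_nonneg _) (hγ0 i)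
          linarith
      _ = N * (2 * (4 * B * h_fro (A * (Φ.submatrix σ id * X σ ^ r)) + 2 * γ σ * h_fro (Φ.submatrix σ id * X σ ^ r)))
            + 2 * γ σ * 2 * (m * h_fro (Φ * X σ ^ r)) := by
          rw [← Matrix.mul_assoc]
          simp only [mul_add, Finset.sum_add_distrib, ← Finset.mul_sum, h_fro_rows, h_mul_row _ (X σ ^ r)]
          simp only [Finset.sum_const, Finset.card_univ, Fintype.card_fin, ← Finset.mul_sum, nsmul_eq_mul]
          have : ∀ i, (Φ.submatrix σ id) i = Φ (σ i) := fun i => rfl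
          simp only [this]
          ring
      _ ≤ _ := by
          have k1 := hAβ (Φ.submatrix σ id * X σ ^ r)
          have k2 : (trace ((Φ.submatrix σ id * X σ ^ r)ᴴ * A * (Φ.submatrix σ id * X σ ^ r))).re
              = (trace (X σ ^ (2*r+1))).re := by
            rw [conjTranspose_mul, conjTranspose_pow, (hX σ).eq]
            have : X σ ^ r * (Φ.submatrix σ id)ᴴ * A * (Φ.submatrix σ id * X σ ^ r)
               = X σ ^ r * X σ * X σ ^ r := by
              conv_rhs =>
                congr
                · congr
                  · skip
                  · rw [hXd]
              simp only [Matrix.mul_assoc]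
            rw [this, ← pow_succ, ← pow_add, show r + 1 + r = 2*r+1 by ring]
          have k3 : h_fro (Φ.submatrix σ id * X σ ^ r) = (trace (Y σ * X σ ^ (2*r))).re := by
            rw [h_fro_pow _ _ (hX σ), hYd]
          rw [k2] at k1
          rw [h_fro_phi Φ hΦ _ (hX σ)]
          rw [k3] at k1 ⊢
          have k4 := mul_le_mul_of_nonneg_left k1 (show 0 ≤ (N:ℝ) * (8 * B) by positivity)
          linarith
  simp only [e1] at es
  have es2 := es.trans (mul_le_mul_of_nonneg_left (Finset.sum_le_sum fun σ _ => e2 σ) (by positivity))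
  rw [← Finset.mul_sum, ← Finset.mul_sum, ← Finset.mul_sum, ← Finset.mul_sum] at es2
  have hN' : (0:ℝ) < N := by exact_mod_cast hN
  refine le_of_mul_le_mul_left ?_ hN'
  rw [← Finset.mul_sum]
  linarith

lemma h_Aβ {m l k : ℕ} (V : Matrix (Fin m) (Fin l) ℂ) (hV : Vᴴ * V = 1) (β : ℝ)
    (hβ : ∀ i, h_nsq (V i) ≤ β) (A : Matrix (Fin m) (Fin m) ℂ)
    (hAd : A = V * Vᴴ - Matrix.diagonal (fun i => (V * Vᴴ) i i)) :
    A.IsHermitian ∧ (∀ i, A i i = 0) ∧ (∀ i, h_nsq (A i) ≤ β) ∧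
    ∀ W : Matrix (Fin m) (Fin k) ℂ, h_fro (A * W) ≤ 2 * (trace (Wᴴ * A * W)).re + 4 * β * h_fro W := by
  set P := V * Vᴴ with hP
  have hPH : Pᴴ = P := by rw [hP, conjTranspose_mul, conjTranspose_conjTranspose]
  have hPP : P * P = P := by
    rw [hP, Matrix.mul_assoc, ← Matrix.mul_assoc Vᴴ, hV, Matrix.one_mul]
  have hdiag : ∀ i, P i i = ((h_nsq (V i) : ℝ) : ℂ) := by
    intro i
    rw [hP, Matrix.mul_apply, h_nsq]
    push_cast
    refine Finset.sum_congr rfl fun j _ => ?_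
    rw [conjTranspose_apply]
    rw [show V i j * star (V i j) = ((Complex.normSq (V i j) : ℝ) : ℂ) from Complex.mul_conj _, Complex.normSq_eq_norm_sq]
    push_cast; rfl
  have hrow : ∀ i, h_nsq (P i) = h_nsq (V i) := by
    intro i
    have : ((h_nsq (P i) : ℝ) : ℂ) = ((h_nsq (V i) : ℝ) : ℂ) := by
      rw [← hdiag i]
      conv_rhs => rw [← hPP]
      rw [Matrix.mul_apply, h_nsq]
      push_cast
      refine Finset.sum_congr rfl fun j _ => ?_
      have : P j i = star (P i j) := by
        conv_lhs => rw [← hPH]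
        rfl
      rw [this]
      rw [show P i j * star (P i j) = ((Complex.normSq (P i j) : ℝ) : ℂ) from Complex.mul_conj _, Complex.normSq_eq_norm_sq]
      push_cast; rfl
    exact_mod_cast this
  have hsq : ∀ i, h_nsq (V i)^2 ≤ h_nsq (V i) := by
    intro i
    conv_rhs => rw [← hrow]
    have : ‖P i i‖^2 ≤ h_nsq (P i) := by
      rw [h_nsq]
      exact Finset.single_le_sum (f := fun j => ‖P i j‖^2) (fun j _ => by positivity) (Finset.mem_univ i)
    rw [hdiag, Complex.norm_real, Real.norm_eq_abs, sq_abs] at this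
    exact this
  set d : Matrix (Fin m) (Fin m) ℂ := Matrix.diagonal (fun i => P i i) with hd
  have hdH : dᴴ = d := by
    rw [hd, diagonal_conjTranspose]
    congr 1; ext i
    simp [hdiag]
  refine ⟨?_, ?_, ?_, ?_⟩
  · rw [hAd, IsHermitian, conjTranspose_sub, hPH, hdH]
  · intro i; rw [hAd]; simp [hd]
  · intro i
    refine le_trans ?_ (hβ i)
    rw [← hrow i]
    refine Finset.sum_le_sum fun j _ => ?_
    rw [hAd, Matrix.sub_apply]
    by_cases hij : i = j
    · subst hij; simp [hd]
    · simp [hd, hij]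
  · intro W
    have t1 : h_fro (P * W) = (trace (Wᴴ * P * W)).re := by
      rw [h_fro_eq, conjTranspose_mul, hPH, Matrix.mul_assoc, ← Matrix.mul_assoc P, hPP, ← Matrix.mul_assoc]
    have t2 : (trace (Wᴴ * d * W)).re = ∑ i, ∑ j, h_nsq (V i) * ‖W i j‖^2 := by
      rw [Finset.sum_comm]
      simp only [trace, diag_apply, Complex.re_sum, Matrix.mul_apply (N := W), hd, Matrix.mul_diagonal]
      refine Finset.sum_congr rfl fun j _ => Finset.sum_congr rfl fun i _ => ?_
      rw [hdiag, conjTranspose_apply]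
      have : star (W i j) * ((h_nsq (V i) : ℝ) : ℂ) * W i j = ((h_nsq (V i) : ℝ) : ℂ) * (W i j * star (W i j)) := by ring
      rw [this]
      rw [show W i j * star (W i j) = ((Complex.normSq (W i j) : ℝ) : ℂ) from Complex.mul_conj _, Complex.normSq_eq_norm_sq,
        ← Complex.ofReal_mul, Complex.ofReal_re]
    have t3 : h_fro (d * W) ≤ (trace (Wᴴ * d * W)).re := by
      rw [t2, h_fro]
      refine Finset.sum_le_sum fun i _ => Finset.sum_le_sum fun j _ => ?_
      rw [hd, diagonal_mul, norm_mul, mul_pow, hdiag, Complex.norm_real, Real.norm_eq_abs, sq_abs]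
      exact mul_le_mul_of_nonneg_right (hsq i) (by positivity)
    have t4 : (trace (Wᴴ * d * W)).re ≤ β * h_fro W := by
      rw [t2, h_fro, Finset.mul_sum]
      refine Finset.sum_le_sum fun i _ => ?_
      rw [Finset.mul_sum]
      refine Finset.sum_le_sum fun j _ => ?_
      exact mul_le_mul_of_nonneg_right (hβ i) (by positivity)
    have t5 : (trace (Wᴴ * A * W)).re = (trace (Wᴴ * P * W)).re - (trace (Wᴴ * d * W)).re := by
      rw [hAd, Matrix.mul_sub, Matrix.sub_mul, trace_sub, Complex.sub_re]
    have t6 := h_fro_sub (P * W) (d * W)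
    rw [← Matrix.sub_mul, ← hAd] at t6
    rw [t5]; linarith

lemma h_gm {m N k : ℕ} (hN : 0 < N) (Φ : Matrix (Fin N) (Fin k) ℂ)
    (h0' : ∀ t, ∑ n, Φ n t = 0) (B : ℝ)
    (hB : ∀ a, h_nsq (Φ a) ≤ B) (A : Matrix (Fin m) (Fin m) ℂ) (β : ℝ) (i : Fin m)
    (hβ : h_nsq (A i) ≤ β) (r : ℕ) :
    ∑ σ : Fin m → Fin N, h_nsq ((A * Φ.submatrix σ id) i)^(2*r+2)
      ≤ 2 * (Fintype.card (Fin m → Fin N) : ℝ) * (32 * ((r+1) * B * β))^(2*r+2) := by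
  have hB0 : 0 ≤ B := le_trans (h_nsq_nonneg _) (hB ⟨0, hN⟩)
  have hn : ∀ v : Fin k → ℂ, ‖(WithLp.toLp 2 v : EuclideanSpace ℂ (Fin k))‖^2 = h_nsq v := by
    intro v; rw [EuclideanSpace.norm_sq_eq]; rfl
  have := h_gmom (E := EuclideanSpace ℂ (Fin k)) hN
    (fun j n => WithLp.toLp 2 (A i j • Φ n)) (fun j => ‖A i j‖^2 * B) (β * B) ?_ ?_ ?_ (2*r+1)
  · have e : ∀ σ : Fin m → Fin N, ∑ j, (WithLp.toLp 2 (A i j • Φ (σ j)) : EuclideanSpace ℂ (Fin k)) = WithLp.toLp 2 ((A * Φ.submatrix σ id) i) := by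
      intro σ
      ext t
      simp [Matrix.mul_apply]
    simp only [e, hn] at this
    refine this.trans (le_of_eq ?_)
    push_cast
    ring
  · intro j
    ext t
    simp [← Finset.mul_sum, h0']
  · intro j n
    rw [hn]
    have : h_nsq (A i j • Φ n) = ‖A i j‖^2 * h_nsq (Φ n) := by
      simp [h_nsq, Finset.mul_sum, mul_pow]
    rw [this]
    exact mul_le_mul_of_nonneg_left (hB n) (by positivity)
  · rw [← Finset.sum_mul]
    exact mul_le_mul_of_nonneg_right hβ hB0

lemma h_add_pow (a b : ℝ) (n : ℕ) (ha : 0 ≤ a) (hb : 0 ≤ b) : (a + b)^n ≤ 2^n * (a^n + b^n) := by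
  rcases le_total a b with h | h
  · calc (a+b)^n ≤ (2*b)^n := pow_le_pow_left₀ (by positivity) (by linarith) n
      _ = 2^n * b^n := by rw [mul_pow]
      _ ≤ _ := by gcongr; have : 0 ≤ a^n := by positivity
                  linarith
  · calc (a+b)^n ≤ (2*a)^n := pow_le_pow_left₀ (by positivity) (by linarith) n
      _ = 2^n * a^n := by rw [mul_pow]
      _ ≤ _ := by gcongr; have : 0 ≤ b^n := by positivity
                  linarith

/-- The pointwise scalar estimate. -/
lemma h_point (B β γ M x y Γ R : ℝ) (r : ℕ) (hB : 0 ≤ B) (hβ : 0 ≤ β) (hγ : 0 ≤ γ) (hM : 0 ≤ M)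
    (hΓ : 0 < Γ) (hR : 0 < R) (hMR : M ≤ R) :
    (2*r+1)/2 * (8 * B * x^(2*r+1) + 16 * B * β * (y * x^(2*r)) + 2 * γ * (y * x^(2*r) + M * x^(2*r)))
      ≤ x^(2*r+2)/2 + ((32 * (r+1) * B)^(2*r+2) + (4 * (r+1) * Γ * R)^(r+1) *
          (((16 * B * β + 2 * γ)/Γ)^(2*r+2) + 2^(2*r+2) * (y^(2*r+2) / R^(2*r+2) + 1))) := by
  have y1 := h_young (8*(r+1)*B) |x| (2*r+1) (by positivity) (by positivity)
  have y2 := h_young ((r+1)*((16 * B * β + 2 * γ) * (|y| + M))) (x^2) r (by positivity) (by positivity)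
  rw [show 2*r+1+1 = 2*r+2 by ring, show 4 * (8*((r:ℝ)+1)*B) = 32*(r+1)*B by ring] at y1
  have ev : ∀ z : ℝ, |z|^(2*r+2) = z^(2*r+2) := fun z => by
    rw [show 2*r+2 = 2*(r+1) by ring, pow_mul, pow_mul, sq_abs]
  rw [ev] at y1
  rw [← pow_mul, ← pow_mul, show 2*(r+1) = 2*r+2 by ring] at y2
  set a := 16 * B * β + 2 * γ with ha
  have ha0 : 0 ≤ a := by positivity
  have px : 0 ≤ x^(2*r) := by rw [pow_mul]; positivity
  have l1 : (2*r+1)/2 * (8 * B * x^(2*r+1)) ≤ 8*(r+1)*B * |x|^(2*r+1) := by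
    have a1 : x ^ (2*r+1) ≤ |x|^(2*r+1) := by rw [← abs_pow]; exact le_abs_self _
    have a2 : 0 ≤ B * |x|^(2*r+1) := by positivity
    have a3 := mul_le_mul_of_nonneg_left a1 (show 0 ≤ (2*(r:ℝ)+1)/2 * (8*B) by positivity)
    nlinarith
  have l2 : (2*r+1)/2 * (16 * B * β * (y * x^(2*r)) + 2 * γ * (y * x^(2*r) + M * x^(2*r)))
      ≤ (r+1)*(a * (|y| + M)) * x^(2*r) := by
    have a1 : 16 * B * β * (y * x^(2*r)) + 2 * γ * (y * x^(2*r) + M * x^(2*r)) ≤ a * (|y|+M) * x^(2*r) := by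
      have b1 : 16 * B * β * y + 2 * γ * (y+M) ≤ a * (|y|+M) := by
        have c1 := mul_le_mul_of_nonneg_left (le_abs_self y) ha0
        have c2 : 0 ≤ 16 * B * β * M := by positivity
        rw [ha] at c1 ⊢; linarith
      have := mul_le_mul_of_nonneg_right b1 px
      linarith
    have a2 : 0 ≤ a * (|y|+M) * x^(2*r) := by positivity
    have a3 := mul_le_mul_of_nonneg_left a1 (show 0 ≤ (2*(r:ℝ)+1)/2 by positivity)
    nlinarith
  have l3 : (4 * ((r+1)*(a * (|y| + M))))^(r+1) ≤ (4 * (r+1) * Γ * R)^(r+1) *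
          ((a/Γ)^(2*r+2) + 2^(2*r+2) * (y^(2*r+2) / R^(2*r+2) + 1)) := by
    have e : 4 * (((r:ℝ)+1)*(a * (|y| + M))) = (4 * (r+1) * Γ * R) * ((a/Γ) * ((|y|+M)/R)) := by
      field_simp
    rw [e, mul_pow (4 * ((r:ℝ)+1) * Γ * R)]
    apply mul_le_mul_of_nonneg_left _ (by positivity)
    have b0 : 0 ≤ a/Γ := by positivity
    have b1 : 0 ≤ (|y|+M)/R := by positivity
    have b2 : (a/Γ * ((|y|+M)/R))^(r+1) ≤ (a/Γ)^(2*r+2) + ((|y|+M)/R)^(2*r+2) := by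
      rw [mul_pow, show 2*r+2 = (r+1)*2 by ring, pow_mul, pow_mul]
      nlinarith [sq_nonneg ((a/Γ)^(r+1) - ((|y|+M)/R)^(r+1)), sq_nonneg ((a/Γ)^(r+1)), sq_nonneg (((|y|+M)/R)^(r+1))]
    have b3 : ((|y|+M)/R)^(2*r+2) ≤ 2^(2*r+2) * (y^(2*r+2) / R^(2*r+2) + 1) := by
      have c1 : (|y|+M)/R ≤ |y|/R + 1 := by
        rw [add_div]; gcongr; exact (div_le_one hR).2 hMR
      refine (pow_le_pow_left₀ b1 c1 _).trans ?_
      refine (h_add_pow _ _ _ (by positivity) (by norm_num)).trans ?_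
      rw [div_pow, ev, one_pow]
    linarith
  linarith

lemma h_final {m N k : ℕ} (hN : 0 < N) (hm : 0 < m) (Φ : Matrix (Fin N) (Fin k) ℂ)
    (hΦ : Φᴴ * Φ = (N : ℂ) • (1 : Matrix (Fin k) (Fin k) ℂ))
    (h0' : ∀ t, ∑ n, Φ n t = 0) (B : ℝ) (hBpos : 0 < B)
    (hB : ∀ a, h_nsq (Φ a) ≤ B) (A : Matrix (Fin m) (Fin m) ℂ)
    (hA : A.IsHermitian) (hA0 : ∀ i, A i i = 0) (β : ℝ) (hβ : 0 < β)
    (hrow : ∀ i, h_nsq (A i) ≤ β)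
    (hAβ : ∀ W : Matrix (Fin m) (Fin k) ℂ, h_fro (A * W) ≤ 2 * (trace (Wᴴ * A * W)).re + 4 * β * h_fro W)
    (r : ℕ) :
    ∑ σ : Fin m → Fin N, (trace (((Φ.submatrix σ id)ᴴ * A * (Φ.submatrix σ id)) ^ (2*r+2))).re ≤
     (Fintype.card (Fin m → Fin N) : ℝ) * (2 * k * (32 * (r+1) * B)^(2*r+2) +
       16 * k * m * (65536 * ((r+1) * ((r+1) * B * β) * (m + 2 * (r+1) * B)))^(r+1)) := by
  set X : (Fin m → Fin N) → Matrix (Fin k) (Fin k) ℂ :=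
    fun σ => (Φ.submatrix σ id)ᴴ * A * (Φ.submatrix σ id) with hXd
  set Y : (Fin m → Fin N) → Matrix (Fin k) (Fin k) ℂ :=
    fun σ => (Φ.submatrix σ id)ᴴ * (Φ.submatrix σ id) with hYd
  have hX : ∀ σ, (X σ).IsHermitian := fun σ => isHermitian_conjTranspose_mul_mul _ hA
  have hY : ∀ σ, (Y σ).IsHermitian := fun σ => isHermitian_conjTranspose_mul_self _
  set Γ : ℝ := (r+1) * B * β with hΓ
  set R : ℝ := m + 2 * (r+1) * B with hR
  have hΓ0 : 0 < Γ := by positivity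
  have hR0 : 0 < R := by positivity
  have hMR : (m:ℝ) ≤ R := by
    have : 0 ≤ 2 * ((r:ℝ)+1) * B := by positivity
    linarith
  have hne : Nonempty (Fin m) := ⟨⟨0, hm⟩⟩
  set nu : (Fin m → Fin N) → Fin m → ℝ := fun σ i => h_nsq ((A * Φ.submatrix σ id) i) with hnu
  have hnu0 : ∀ σ i, 0 ≤ nu σ i := fun σ i => h_nsq_nonneg _
  have hmax : ∀ σ, ∃ i0, ∀ i, nu σ i ≤ nu σ i0 := fun σ => Finite.exists_max (nu σ)
  choose i0 hi0 using hmax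
  have main := h_Xmain hN Φ hΦ h0' B hB A hA hA0 β hAβ X Y hXd hYd (fun σ => nu σ (i0 σ)) (fun σ i => hi0 σ i) r
  set D : ℝ := (4 * (r+1) * Γ * R)^(r+1) with hD
  have hD0 : 0 ≤ D := by positivity
  have hpt : ∀ σ, (2*r+1)/2 * (8 * B * (trace (X σ ^ (2*r+1))).re
      + 16 * B * β * (trace (Y σ * X σ ^ (2*r))).re
      + 2 * nu σ (i0 σ) * ((trace (Y σ * X σ ^ (2*r))).re + m * (trace (X σ ^ (2*r))).re))
      ≤ (trace (X σ ^ (2*r+2))).re / 2 + (k * (32 * (r+1) * B)^(2*r+2) + D *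
        (k * ((16 * B * β + 2 * nu σ (i0 σ))/Γ)^(2*r+2) + 2^(2*r+2) * ((trace (Y σ ^ (2*r+2))).re / R^(2*r+2) + k))) := by
    intro σ
    obtain ⟨y, x, c, hc, h⟩ := h_spec (Y σ) (X σ) (hY σ) (hX σ)
    have t1 : ∀ n, (trace (X σ ^ n)).re = ∑ i, ∑ j, c i j * x j ^ n := fun n => by
      simpa using h 0 n
    have t2 : ∀ n, (trace (Y σ ^ n)).re = ∑ i, ∑ j, c i j * y i ^ n := fun n => by
      simpa using h n 0
    have t3 : (trace (Y σ * X σ ^ (2*r))).re = ∑ i, ∑ j, c i j * (y i * x j ^ (2*r)) := by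
      simpa using h 1 (2*r)
    have t4 : (k:ℝ) = ∑ i, ∑ j, c i j := by simpa using h 0 0
    rw [t1, t1, t1, t2, t3, t4]
    simp only [Finset.mul_sum, Finset.sum_mul, Finset.sum_div, ← Finset.sum_add_distrib]
    refine Finset.sum_le_sum fun i _ => Finset.sum_le_sum fun j _ => ?_
    have := mul_le_mul_of_nonneg_left (h_point B β (nu σ (i0 σ)) m (x j) (y i) Γ R r hBpos.le hβ.le
      (hnu0 _ _) (by positivity) hΓ0 hR0 hMR) (hc i j)
    refine le_trans (le_of_eq ?_) (this.trans (le_of_eq ?_)) <;> ring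
  have s1 := main.trans (Finset.sum_le_sum fun σ _ => hpt σ)
  have hgam : ∑ σ, ((16 * B * β + 2 * nu σ (i0 σ))/Γ)^(2*r+2)
      ≤ (Fintype.card (Fin m → Fin N) : ℝ) * (3 * m * 128^(2*r+2)) := by
    have g1 : ∀ σ, ((16 * B * β + 2 * nu σ (i0 σ))/Γ)^(2*r+2) ≤ 32^(2*r+2) + (4/Γ)^(2*r+2) * ∑ i, nu σ i ^(2*r+2) := by
      intro σ
      have q0 : 0 ≤ nu σ (i0 σ) := hnu0 _ _
      have q1 : 16 * B * β / Γ ≤ 16 := by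
        rw [div_le_iff₀ hΓ0, hΓ]
        have : 0 ≤ (r:ℝ) * (B * β) := by positivity
        nlinarith
      rw [add_div]
      refine (h_add_pow _ _ _ (by positivity) (by positivity)).trans ?_
      have q2 : (16 * B * β / Γ)^(2*r+2) ≤ 16^(2*r+2) := pow_le_pow_left₀ (by positivity) q1 _
      have q3 : nu σ (i0 σ)^(2*r+2) ≤ ∑ i, nu σ i ^(2*r+2) :=
        Finset.single_le_sum (f := fun i => nu σ i ^(2*r+2)) (fun i _ => pow_nonneg (hnu0 σ i) _) (Finset.mem_univ _)
      have q4 : (2 * nu σ (i0 σ) / Γ)^(2*r+2) = (2/Γ)^(2*r+2) * nu σ (i0 σ)^(2*r+2) := by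
        rw [← mul_pow]; congr 1; ring
      rw [q4, mul_add]
      have q5 : (2:ℝ)^(2*r+2) * ((2/Γ)^(2*r+2) * nu σ (i0 σ)^(2*r+2)) = (4/Γ)^(2*r+2) * nu σ (i0 σ)^(2*r+2) := by
        rw [← mul_assoc, ← mul_pow]; congr 2; ring
      rw [q5]
      have q6 : (2:ℝ)^(2*r+2) * 16^(2*r+2) = 32^(2*r+2) := by rw [← mul_pow]; norm_num
      have q7 := mul_le_mul_of_nonneg_left q2 (show (0:ℝ) ≤ 2^(2*r+2) by positivity)
      have q8 := mul_le_mul_of_nonneg_left q3 (show (0:ℝ) ≤ (4/Γ)^(2*r+2) by positivity)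
      linarith
    refine (Finset.sum_le_sum fun σ _ => g1 σ).trans ?_
    rw [Finset.sum_add_distrib, ← Finset.mul_sum, Finset.sum_comm]
    have g2 : ∑ i, ∑ σ : Fin m → Fin N, nu σ i ^(2*r+2) ≤ ∑ i : Fin m, 2 * (Fintype.card (Fin m → Fin N) : ℝ) * (32 * Γ)^(2*r+2) :=
      Finset.sum_le_sum fun i _ => h_gm hN Φ h0' B hB A β i (hrow i) r
    simp only [Finset.sum_const, Finset.card_univ, nsmul_eq_mul, Fintype.card_fin] at g2 ⊢
    have g3 := mul_le_mul_of_nonneg_left g2 (show (0:ℝ) ≤ (4/Γ)^(2*r+2) by positivity)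
    have g4 : (4/Γ)^(2*r+2) * ((m:ℝ) * (2 * (Fintype.card (Fin m → Fin N) : ℝ) * (32 * Γ)^(2*r+2)))
       = (Fintype.card (Fin m → Fin N) : ℝ) * (2 * m * 128^(2*r+2)) := by
      have : (128:ℝ)^(2*r+2) = (4/Γ)^(2*r+2) * (32*Γ)^(2*r+2) := by
        rw [← mul_pow]; congr 1; field_simp; norm_num
      rw [this]; ring
    have g5 : (32:ℝ)^(2*r+2) ≤ m * 128^(2*r+2) := by
      have h1 : (1:ℝ) ≤ m := by exact_mod_cast hm
      have h2 : (32:ℝ)^(2*r+2) ≤ 128^(2*r+2) := pow_le_pow_left₀ (by norm_num) (by norm_num) _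
      have h3 : (0:ℝ) ≤ 128^(2*r+2) := by positivity
      nlinarith
    have g6 := mul_le_mul_of_nonneg_left g5 (show (0:ℝ) ≤ (Fintype.card (Fin m → Fin N) : ℝ) by positivity)
    rw [g4] at g3
    linarith
  have hYm : ∑ σ, (trace (Y σ ^ (2*r+2))).re / R^(2*r+2) ≤ (Fintype.card (Fin m → Fin N) : ℝ) * (4 * k * 4^(2*r+2)) := by
    rw [← Finset.sum_div, div_le_iff₀ (by positivity)]
    refine (h_Ymom hN Φ hΦ B hB r).trans (le_of_eq ?_)
    rw [mul_pow 4]; ring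
  simp only [Finset.sum_add_distrib, ← Finset.mul_sum] at s1
  rw [← Finset.sum_div] at s1
  simp only [Finset.sum_const, Finset.card_univ, nsmul_eq_mul] at s1
  set C : ℝ := (Fintype.card (Fin m → Fin N) : ℝ) with hC
  have hC0 : 0 ≤ C := by positivity
  have z1 : (2:ℝ)^(2*r+2) * (C * (4 * k * 4^(2*r+2)) + C * k) ≤ C * (5 * k * m * 128^(2*r+2)) := by
    have a1 : (2:ℝ)^(2*r+2) * 4^(2*r+2) ≤ 128^(2*r+2) := by
      rw [← mul_pow]; exact pow_le_pow_left₀ (by norm_num) (by norm_num) _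
    have a2 : (2:ℝ)^(2*r+2) ≤ 128^(2*r+2) := pow_le_pow_left₀ (by norm_num) (by norm_num) _
    have a3 : (1:ℝ) ≤ m := by exact_mod_cast hm
    have a4 : (0:ℝ) ≤ 128^(2*r+2) := by positivity
    have a5 : 4 * ((2:ℝ)^(2*r+2) * 4^(2*r+2)) + 2^(2*r+2) ≤ 5 * m * 128^(2*r+2) := by nlinarith
    have := mul_le_mul_of_nonneg_left a5 (show (0:ℝ) ≤ C * k by positivity)
    linarith
  have z2 := mul_le_mul_of_nonneg_left hgam (show (0:ℝ) ≤ k by positivity)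
  have z3 := mul_le_mul_of_nonneg_left (add_le_add hYm (le_refl (C * k))) (show (0:ℝ) ≤ 2^(2*r+2) by positivity)
  have z4 := mul_le_mul_of_nonneg_left (add_le_add z2 (z3.trans z1)) hD0
  have z5 : D * 128^(2*r+2) = (65536 * ((r+1) * Γ * R))^(r+1) := by
    rw [hD, show 2*r+2 = 2*(r+1) by ring, pow_mul, ← mul_pow]
    congr 1; ring
  rw [← z5]
  linarith

/-- the Schatten `4p`-norm moment bound
`E ‖F*AF‖_{4p}^{4p} ≤ c^{2p} k m p^{6p} k^{2p} l^{2p} r₁^{8p} r₂^{4p}`, where `A` is the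
off-diagonal part of `VV*`.  Since `F*AF` is Hermitian and `4p` is even, its Schatten
`4p`-norm to the power `4p` equals the (real) trace of `(F*AF)^{4p}`. -/
theorem stmt13 :
    ∃ c : ℝ, 0 < c ∧
      ∀ (N m l k : ℕ) (Φ : Matrix (Fin N) (Fin k) ℂ) (V : Matrix (Fin m) (Fin l) ℂ)
        (r₁ r₂ : ℝ),
        Even m → k ≤ l → l ≤ m →
        Φᴴ * Φ = (N : ℂ) • (1 : Matrix (Fin k) (Fin k) ℂ) →
        (∀ t : Fin k, ∑ j : Fin N, Φ j t = 0) →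
        1 ≤ r₁ → (∀ j : Fin N, l2norm (fun t => Φ j t) ≤ r₁ * Real.sqrt k) →
        Vᴴ * V = (1 : Matrix (Fin l) (Fin l) ℂ) →
        1 ≤ r₂ → (∀ i : Fin m, l2norm (fun t => V i t) ≤ r₂ * Real.sqrt ((l : ℝ) / m)) →
        ∀ p : ℕ, 2 ≤ p →
        unifExp (fun σ : Fin m → Fin N =>
            (Matrix.trace
              (((Φ.submatrix σ id)ᴴ *
                  (V * Vᴴ - Matrix.diagonal (fun i => (V * Vᴴ) i i)) *
                (Φ.submatrix σ id)) ^ (4 * p))).re) ≤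
          c ^ (2 * p) * k * m * (p : ℝ) ^ (6 * p) * (k : ℝ) ^ (2 * p) * (l : ℝ) ^ (2 * p) *
            r₁ ^ (8 * p) * r₂ ^ (4 * p) := by
  refine ⟨18 * 196608 * 8, by norm_num, ?_⟩
  intro N m l k Φ V r₁ r₂ _ hkl hlm hΦ h0 hr₁ hrow₁ hV hr₂ hrow₂ p hp
  rcases Nat.eq_zero_or_pos k with hk | hk
  · subst hk
    simp [unifExp, Matrix.trace]
  have hm : 0 < m := by omega
  have hl : 0 < l := by omega
  rcases Nat.eq_zero_or_pos N with hN | hN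
  · subst hN
    have : IsEmpty (Fin m → Fin 0) := ⟨fun f => (f ⟨0, hm⟩).elim0⟩
    simp only [unifExp, Finset.univ_eq_empty, Finset.sum_empty, zero_div]
    positivity
  have hk' : (0:ℝ) < k := by exact_mod_cast hk
  have hm' : (0:ℝ) < m := by exact_mod_cast hm
  have hl' : (0:ℝ) < l := by exact_mod_cast hl
  have hnn : ∀ {a : ℕ} (v : Fin a → ℂ) (t : ℝ), l2norm v ≤ t → h_nsq v ≤ t^2 := by
    intro a v t h
    have e : l2norm v = Real.sqrt (h_nsq v) := by
      unfold l2norm h_nsq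
      simp only [Complex.normSq_eq_norm_sq]
    rw [e] at h
    have := Real.sq_sqrt (h_nsq_nonneg v)
    rw [← this]
    exact pow_le_pow_left₀ (Real.sqrt_nonneg _) h 2
  have hB : ∀ a, h_nsq (Φ a) ≤ r₁^2 * k := by
    intro a
    have := hnn _ _ (hrow₁ a)
    rwa [mul_pow, Real.sq_sqrt hk'.le] at this
  have hβ : ∀ i, h_nsq (V i) ≤ r₂^2 * (l / m) := by
    intro a
    have := hnn _ _ (hrow₂ a)
    rwa [mul_pow, Real.sq_sqrt (by positivity)] at this
  obtain ⟨a1, a2, a3, a4⟩ := h_Aβ (k := k) V hV _ hβ _ rfl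
  obtain ⟨r, hr⟩ : ∃ r, 2 * p = r + 1 := ⟨2*p-1, by omega⟩
  have hfin := h_final hN hm Φ hΦ h0 (r₁^2 * k) (by positivity) hB _ a1 a2 (r₂^2 * (l/m)) (by positivity) a3 a4 r
  rw [show 2*r+2 = 4*p by omega] at hfin
  have hr' : (r:ℝ) + 1 = 2 * p := by exact_mod_cast hr.symm
  rw [hr', ← hr] at hfin
  have hcard : (0:ℝ) < (Fintype.card (Fin m → Fin N) : ℝ) := by
    have : Nonempty (Fin N) := ⟨⟨0, hN⟩⟩
    exact_mod_cast Fintype.card_pos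
  unfold unifExp
  rw [div_le_iff₀ hcard, mul_comm _ (Fintype.card (Fin m → Fin N) : ℝ)]
  refine hfin.trans (mul_le_mul_of_nonneg_left ?_ hcard.le)
  have hp1 : (1:ℝ) ≤ p := by exact_mod_cast (by omega : 1 ≤ p)
  have hkl' : (k:ℝ) ≤ l := by exact_mod_cast hkl
  have hkm' : (k:ℝ) ≤ m := by exact_mod_cast hkl.trans hlm
  have hm1 : (1:ℝ) ≤ m := by exact_mod_cast hm
  set L : ℝ := 8 * p^3 * r₁^4 * r₂^2 * k * l with hL
  have hL0 : 0 ≤ L := by positivity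
  have f1 : (32 * (2 * (p:ℝ)) * (r₁^2 * k))^(4*p) ≤ (196608 * L)^(2*p) := by
    rw [show 4*p = 2*(2*p) by ring, pow_mul]
    apply pow_le_pow_left₀ (by positivity)
    have e : (32 * (2 * (p:ℝ)) * (r₁^2 * k))^2 = 4096 * (p^2 * r₁^4 * k) * (1 * 1 * k) := by ring
    have e' : 196608 * L = 1572864 * (p^2 * r₁^4 * k) * (p * r₂^2 * l) := by rw [hL]; ring
    rw [e, e']
    have h2 : 1 ≤ r₂^2 := one_le_pow₀ hr₂
    gcongr
    norm_num
  have f2 : (65536 * (2 * (p:ℝ) * (2 * p * (r₁^2 * k) * (r₂^2 * (l/m))) * (m + 2 * (2 * p) * (r₁^2 * k))))^(2*p)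
      ≤ (196608 * L)^(2*p) := by
    apply pow_le_pow_left₀ (by positivity)
    have g1 : (m:ℝ) + 2 * (2 * p) * (r₁^2 * k) ≤ m * (6 * p * r₁^2) := by
      have h2 : 1 ≤ r₁^2 := one_le_pow₀ hr₁
      have h3 : 1 ≤ p * r₁^2 := by nlinarith
      have h4 : p * r₁^2 * k ≤ p * r₁^2 * m := mul_le_mul_of_nonneg_left hkm' (by positivity)
      nlinarith
    calc 65536 * (2 * (p:ℝ) * (2 * p * (r₁^2 * k) * (r₂^2 * (l/m))) * (m + 2 * (2 * p) * (r₁^2 * k)))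
        ≤ 65536 * (2 * (p:ℝ) * (2 * p * (r₁^2 * k) * (r₂^2 * (l/m))) * (m * (6 * p * r₁^2))) := by gcongr
      _ = 196608 * L := by rw [hL]; field_simp; norm_num
  calc _ ≤ 2 * k * (196608 * L)^(2*p) + 16 * k * m * (196608 * L)^(2*p) := by gcongr
    _ ≤ 18 * (k * m * (196608 * L)^(2*p)) := by
        have : 0 ≤ k * (196608 * L)^(2*p) := by positivity
        nlinarith
    _ ≤ 18^(2*p) * (k * m * (196608 * L)^(2*p)) := by
        gcongr
        exact le_self_pow₀ (by norm_num) (by omega)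
    _ = _ := by
        rw [hL]
        rw [show 6*p = 3*(2*p) by ring, show 8*p = 4*(2*p) by ring, show 4*p = 2*(2*p) by ring,
          pow_mul (p:ℝ), pow_mul r₁, pow_mul r₂]
        simp only [mul_pow]
        ring
end

section
/- Let D ∈ ℝ^{m×m} be the first-order difference matrix (D_{ii} = 1, D_{i,i−1} = −1, all other entries 0), let r ≥ 1 be an integer, and let D^{−r} = U S Vᵀ be a singular value decomposition with singular values σ₁ ≥ σ₂ ≥ … ≥ σ_m, and V_l the first l columns of V. Then for every matrix M ∈ ℂ^{m×k} and every h ∈ ℂ^k, ‖D^{−r} M h‖₂ ≥ σ_l · σ_min(V_lᵀ M) · ‖h‖₂. -/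
open Matrix Finset

lemma aux_l2_smul {n : Type*} [Fintype n] (c : ℝ) (hc : 0 ≤ c) (v : n → ℂ) :
    l2norm ((c : ℂ) • v) = c * l2norm v := by
  unfold l2norm
  simp only [Pi.smul_apply, smul_eq_mul, Complex.normSq_mul, Complex.normSq_ofReal]
  rw [← Finset.mul_sum, Real.sqrt_mul (mul_nonneg hc hc), Real.sqrt_mul_self hc]

lemma aux_l2_nonneg {n : Type*} [Fintype n] (v : n → ℂ) : 0 ≤ l2norm v := Real.sqrt_nonneg _

lemma aux_sigmaMin {m n : Type*} [Fintype m] [Fintype n] (A : Matrix m n ℂ) (h : n → ℂ) :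
    sigmaMin A * l2norm h ≤ l2norm (A.mulVec h) := by
  rcases (aux_l2_nonneg h).eq_or_lt with h0 | hpos
  · rw [← h0, mul_zero]
    exact aux_l2_nonneg _
  · rw [← le_div_iff₀ hpos]
    apply csInf_le
    · refine ⟨0, ?_⟩
      rintro t ⟨x, _, rfl⟩
      exact aux_l2_nonneg _
    · refine ⟨(((l2norm h)⁻¹ : ℝ) : ℂ) • h, ?_, ?_⟩
      · rw [aux_l2_smul _ (inv_nonneg.2 hpos.le), inv_mul_cancel₀ hpos.ne']
      · rw [Matrix.mulVec_smul, aux_l2_smul _ (inv_nonneg.2 hpos.le)]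
        field_simp

lemma aux_sum_normSq {n : Type*} [Fintype n] (v : n → ℂ) :
    ((∑ i, Complex.normSq (v i) : ℝ) : ℂ) = star v ⬝ᵥ v := by
  simp [dotProduct, Complex.normSq_eq_conj_mul_self]

lemma aux_isometry {m : ℕ} (U : Matrix (Fin m) (Fin m) ℝ) (hU : Uᵀ * U = 1) (v : Fin m → ℂ) :
    l2norm ((U.map Complex.ofReal).mulVec v) = l2norm v := by
  have h1 : (U.map Complex.ofReal)ᴴ * U.map Complex.ofReal = 1 := by
    have h2 : (U.map Complex.ofReal)ᴴ = Uᵀ.map Complex.ofReal := by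
      ext i j
      simp [Matrix.conjTranspose_apply]
    have h3 := Matrix.map_mul (L := Uᵀ) (M := U) (f := Complex.ofRealHom)
    rw [hU] at h3
    rw [h2]
    refine h3.symm.trans ?_
    simp
  unfold l2norm
  congr 1
  apply Complex.ofReal_injective
  rw [aux_sum_normSq, aux_sum_normSq, Matrix.star_mulVec, Matrix.dotProduct_mulVec,
    Matrix.vecMul_vecMul, h1, Matrix.vecMul_one]

/-- the deterministic lower bound
`‖D^{-r} M h‖₂ ≥ σ_l · σ_min(V_lᵀ M) · ‖h‖₂`, for any SVD `D^{-r} = U S Vᵀ` with decreasing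
singular values, `V_l` the first `l` columns of `V` and `σ_l` the `l`-th singular value. -/
theorem stmt16 (m k l r : ℕ) (hr : 1 ≤ r) (hl : 1 ≤ l) (hlm : l ≤ m)
    (U S V : Matrix (Fin m) (Fin m) ℝ)
    (hU : Uᵀ * U = 1) (hV : Vᵀ * V = 1)
    (hSdiag : ∀ i j : Fin m, i ≠ j → S i j = 0)
    (hSnn : ∀ i : Fin m, 0 ≤ S i i)
    (hSdec : ∀ i j : Fin m, i ≤ j → S j j ≤ S i i)
    (hSVD : ((Dmat m)⁻¹) ^ r = U * S * Vᵀ)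
    (M : Matrix (Fin m) (Fin k) ℂ) (h : Fin k → ℂ) :
    S ⟨l - 1, by omega⟩ ⟨l - 1, by omega⟩ *
        sigmaMin ((((V.submatrix id (Fin.castLE hlm)).transpose).map Complex.ofReal) * M) *
        l2norm h ≤
      l2norm (((((Dmat m)⁻¹ ^ r).map Complex.ofReal) * M).mulVec h) := by
  set σ := S ⟨l - 1, by omega⟩ ⟨l - 1, by omega⟩ with hσ
  have hσ0 : 0 ≤ σ := hSnn _
  rw [mul_assoc]
  refine (mul_le_mul_of_nonneg_left (aux_sigmaMin _ h) hσ0).trans ?_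
  have hmap : ((U * S * Vᵀ).map Complex.ofReal) =
      U.map Complex.ofReal * (S.map Complex.ofReal * Vᵀ.map Complex.ofReal) := by
    rw [Matrix.mul_assoc]
    have h1 := Matrix.map_mul (L := U) (M := S * Vᵀ) (f := Complex.ofRealHom)
    have h2 := Matrix.map_mul (L := S) (M := Vᵀ) (f := Complex.ofRealHom)
    rw [h2] at h1
    exact h1
  rw [hSVD, hmap, ← Matrix.mulVec_mulVec, ← Matrix.mulVec_mulVec, ← Matrix.mulVec_mulVec,
    aux_isometry U hU, ← Matrix.mulVec_mulVec]
  set w := M.mulVec h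
  set z := (Vᵀ.map Complex.ofReal).mulVec w with hz
  have hy : ((V.submatrix id (Fin.castLE hlm)).transpose.map Complex.ofReal).mulVec w
      = fun i => z (Fin.castLE hlm i) := by
    ext i
    rfl
  have hS : (S.map Complex.ofReal).mulVec z = fun i => (S i i : ℂ) * z i := by
    ext i
    simp only [Matrix.mulVec, dotProduct, Matrix.map_apply]
    rw [Finset.sum_eq_single i]
    · intro j _ hj
      rw [hSdiag i j hj.symm]
      simp
    · simp
  rw [hy, hS, ← aux_l2_smul _ hσ0]
  unfold l2norm
  apply Real.sqrt_le_sqrt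
  simp only [Pi.smul_apply, smul_eq_mul, Complex.normSq_mul, Complex.normSq_ofReal]
  calc _ ≤ ∑ i : Fin l, S (Fin.castLE hlm i) (Fin.castLE hlm i) *
        S (Fin.castLE hlm i) (Fin.castLE hlm i) * Complex.normSq (z (Fin.castLE hlm i)) := by
        apply Finset.sum_le_sum
        intro i _
        have hle : σ ≤ S (Fin.castLE hlm i) (Fin.castLE hlm i) := by
          apply hSdec
          rw [Fin.le_def]
          have := i.2
          simp only [Fin.val_castLE]
          omega
        exact mul_le_mul_of_nonneg_right (mul_self_le_mul_self hσ0 hle) (Complex.normSq_nonneg _)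
    _ = ∑ i ∈ Finset.univ.map (Fin.castLEEmb hlm), S i i * S i i * Complex.normSq (z i) := by
        rw [Finset.sum_map]
        rfl
    _ ≤ _ := by
        apply Finset.sum_le_sum_of_subset_of_nonneg (Finset.subset_univ _)
        intro i _ _
        exact mul_nonneg (mul_self_nonneg _) (Complex.normSq_nonneg _)
end
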